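/- Let G=(V,E) be an oriented 3-edge-connected graph with ℓ = |E| − |V| ≥ 11, and let f: E → Z/6 be any function. Then there exist at least 2^{√ℓ / log ℓ} flows φ: E → Z/6 with φ(e) ≠ f(e) for every e ∈ E, where log denotes the logarithm base 2. -/

import Mathlib

open scoped Classical

/-- A multigraph with an orientation: each edge `e` has a source `src e` and a target `tgt e`.
Loops and parallel edges are allowed. -/
structure Multigraph (V E : Type) where
  src : E → V
  tgt : E → V

namespace Multigraph

variable {V E : Type}

/-- `u` and `v` are joined by some edge satisfying the predicate `P`. -/
def adjVia (G : Multigraph V E) (P : E → Prop) (u v : V) : Prop :=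
  ∃ e, P e ∧ ((G.src e = u ∧ G.tgt e = v) ∨ (G.src e = v ∧ G.tgt e = u))

/-- `v` is reachable from `u` using only edges satisfying `P`. -/
def Reaches (G : Multigraph V E) (P : E → Prop) : V → V → Prop :=
  Relation.ReflTransGen (G.adjVia P)

/-- The graph is connected when only edges satisfying `P` are kept (all edges deleted
whose predicate fails, all vertices kept). -/
def ConnectedVia (G : Multigraph V E) (P : E → Prop) : Prop :=
  Nonempty V ∧ ∀ u v : V, G.Reaches P u v

def Connected (G : Multigraph V E) : Prop :=
  G.ConnectedVia fun _ => True

/-- `G` is `k`-edge-connected: it is connected and has no edge cut of size less than `k`;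
equivalently, deleting any set of fewer than `k` edges leaves it connected. -/
def EdgeConnected (G : Multigraph V E) (k : ℕ) : Prop :=
  ∀ S : Set E, S.ncard < k → G.ConnectedVia fun e => e ∉ S

/-- The degree of a vertex (loops counted twice). -/
noncomputable def degree (G : Multigraph V E) (v : V) : ℕ :=
  {e | G.src e = v}.ncard + {e | G.tgt e = v}.ncard

/-- Every vertex has degree exactly 3. -/
def Cubic (G : Multigraph V E) : Prop :=
  ∀ v : V, G.degree v = 3

/-- `φ : E → Γ` is a flow: at every vertex, the sum over outgoing edges equals the
sum over incoming edges. -/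
def IsFlow [Fintype E] {Γ : Type} [AddCommGroup Γ] (G : Multigraph V E) (φ : E → Γ) : Prop :=
  ∀ v : V, (∑ e : E, if G.src e = v then φ e else 0) = ∑ e : E, if G.tgt e = v then φ e else 0

/-- The vertex `v` is an endpoint of some edge of `C`. -/
def touches (G : Multigraph V E) (C : Set E) (v : V) : Prop :=
  ∃ e ∈ C, G.src e = v ∨ G.tgt e = v

/-- An edge set `C` is (the edge set of) a cycle: it is nonempty, every vertex it touches
has degree exactly 2 in it, and it is connected. -/
def IsCycle (G : Multigraph V E) (C : Set E) : Prop :=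
  C.Nonempty ∧
  (∀ v : V, G.touches C v →
    ({e ∈ C | G.src e = v}.ncard + {e ∈ C | G.tgt e = v}.ncard = 2)) ∧
  (∀ u v : V, G.touches C u → G.touches C v → G.Reaches (· ∈ C) u v)

/-- `R` is `k`-closed: every cycle with at least one edge outside `R` has at least
`k+1` edges outside `R`. -/
def Closed (G : Multigraph V E) (k : ℕ) (R : Set E) : Prop :=
  ∀ C : Set E, G.IsCycle C → (C \ R).Nonempty → k + 1 ≤ (C \ R).ncard

/-- The `k`-closure `⟨S⟩ₖ` of `S` : the minimal `k`-closed set containing `S`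
(the family of `k`-closed sets is closed under intersections). -/
def kClosure (G : Multigraph V E) (k : ℕ) (S : Set E) : Set E :=
  ⋂₀ {R : Set E | S ⊆ R ∧ G.Closed k R}

/-- `S` is a `k`-base: its `k`-closure is the whole edge set. -/
def IsBase (G : Multigraph V E) (k : ℕ) (S : Set E) : Prop :=
  G.kClosure k S = Set.univ

/-- An edge set `S` is peripheral if `G − S` is connected. -/
def Peripheral (G : Multigraph V E) (S : Set E) : Prop :=
  G.ConnectedVia fun e => e ∉ S

/-- The spanning subgraph `(V, F)` is a forest, i.e. contains no cycle. -/
def IsForest (G : Multigraph V E) (F : Set E) : Prop :=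
  ∀ C : Set E, G.IsCycle C → ¬ C ⊆ F

/-- `vs`, `es` describe a path: distinct vertices `vs 0, …, vs n` and distinct edges
`es 0, …, es (n-1)` where `es i` joins `vs i` and `vs (i+1)`. -/
def IsPath (G : Multigraph V E) {n : ℕ} (vs : Fin (n + 1) → V) (es : Fin n → E) : Prop :=
  Function.Injective vs ∧ Function.Injective es ∧
  ∀ i : Fin n,
    (G.src (es i) = vs i.castSucc ∧ G.tgt (es i) = vs i.succ) ∨
    (G.src (es i) = vs i.succ ∧ G.tgt (es i) = vs i.castSucc)

/-- The edge `e` has `y` as one endpoint and its other endpoint in `X`,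
i.e. `e ∈ E(y, X)`. -/
def joins (G : Multigraph V E) (e : E) (y : V) (X : Set V) : Prop :=
  (G.src e = y ∧ G.tgt e ∈ X) ∨ (G.tgt e = y ∧ G.src e ∈ X)

/-- `W` is the vertex set of a connected component of `G − X`. -/
def IsComponent (G : Multigraph V E) (X W : Set V) : Prop :=
  W.Nonempty ∧ Disjoint W X ∧
  (∀ u ∈ W, ∀ v : V, v ∉ X → G.adjVia (fun _ => True) u v → v ∈ W) ∧
  (∀ u ∈ W, ∀ v ∈ W, G.Reaches (fun e => G.src e ∉ X ∧ G.tgt e ∉ X) u v)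

/-- The subgraph induced on `W`, with only those of its edges satisfying `P` kept,
is connected. -/
def ConnectedOn (G : Multigraph V E) (W : Set V) (P : E → Prop) : Prop :=
  ∀ u ∈ W, ∀ v ∈ W, G.Reaches (fun e => P e ∧ G.src e ∈ W ∧ G.tgt e ∈ W) u v

/-- The subgraph induced on `W` is `k`-edge-connected. -/
def EdgeConnectedOn (G : Multigraph V E) (W : Set V) (k : ℕ) : Prop :=
  ∀ S : Set E, S.ncard < k → G.ConnectedOn W fun e => e ∉ S

/-- Some cycle lies entirely inside the vertex set `X`. -/
def HasCycleIn (G : Multigraph V E) (X : Set V) : Prop :=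
  ∃ C : Set E, G.IsCycle C ∧ ∀ e ∈ C, G.src e ∈ X ∧ G.tgt e ∈ X

/-- The edge cut `E(X, V \ X)`. -/
def cutEdges (G : Multigraph V E) (X : Set V) : Set E :=
  {e | (G.src e ∈ X ∧ G.tgt e ∉ X) ∨ (G.src e ∉ X ∧ G.tgt e ∈ X)}

/-- A cubic graph is cyclically `k`-edge-connected if every edge cut separating two
cycle-containing parts has at least `k` edges. -/
def CyclicallyEdgeConnected (G : Multigraph V E) (k : ℕ) : Prop :=
  ∀ X : Set V, G.HasCycleIn X → G.HasCycleIn Xᶜ → k ≤ (G.cutEdges X).ncard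

/-- `G` is 3-connected: more than 3 vertices, connected, and still connected after
deleting any two vertices. -/
def ThreeConnected [Fintype V] (G : Multigraph V E) : Prop :=
  3 < Fintype.card V ∧ G.Connected ∧
    ∀ u v : V, G.ConnectedOn {w : V | w ≠ u ∧ w ≠ v} fun _ => True

/-- The graph `G − r` obtained by deleting the vertex `r` and all incident edges. -/
def deleteVertex (G : Multigraph V E) (r : V) :
    Multigraph {v : V // v ≠ r} {e : E // G.src e ≠ r ∧ G.tgt e ≠ r} where
  src e := ⟨G.src e.1, e.2.1⟩
  tgt e := ⟨G.tgt e.1, e.2.2⟩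

end Multigraph

/-! By the Chinese remainder theorem a flow over `ZMod 6` is a pair of flows over `ZMod 2` and
`ZMod 3` such that on every edge at least one of the two avoids its forbidden value. By
submodularity of cuts, some pair of edges at a vertex of degree at least four can be split off
without losing 3-edge-connectedness or changing `|E| - |V|`, so the graph may be assumed cubic.

Removing ears one at a time from a cubic graph without a vertex `r` produces flow bases: edge sets
`S` with connected complement such that flows over `ZMod 3` can avoid any forbidden values outside
`S`. On `S` a flow over `ZMod 2` can be prescribed freely. If some ear is long, the graph contains a
long induced cycle `C` with connected complement; averaging over the flows along `C` yields a flow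
over `ZMod 3` that avoids the forbidden values on half of the edges of `C`, where the flow over
`ZMod 2` is then unconstrained. If all ears are short, the decomposition takes many steps, most of
them with a choice between two ears, so there are many flow bases. A flow over `ZMod 3` that serves
many flow bases `S` avoids its forbidden values on many edges of one of them, and hence has many
partners over `ZMod 2`. Balancing the two cases gives the exponent `√ℓ / log₂ ℓ`. -/

namespace Multigraph

open Finset

/-! ### Cuts and connectedness -/

section Counting

variable {V E : Type}

/-- The edge `x` has one end in `A` and the other end in `B`. -/
def Links (G : Multigraph V E) (x : E) (A B : Finset V) : Prop :=
  (G.src x ∈ A ∧ G.tgt x ∈ B) ∨ (G.src x ∈ B ∧ G.tgt x ∈ A)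

/-- The number of darts (edges with a chosen direction of traversal) leading from `A` to `B`. It is
the number of edges between `A` and `B` if these are disjoint, and twice the number of edges inside
`A` if `A = B`; in this form it is additive in both arguments. -/
noncomputable def dartCount [Fintype E] (G : Multigraph V E) (A B : Finset V) : ℕ :=
  ∑ x, ((if G.src x ∈ A ∧ G.tgt x ∈ B then 1 else 0) +
    (if G.src x ∈ B ∧ G.tgt x ∈ A then 1 else 0))

/-- The edges with both ends in `A`. -/
noncomputable def edgesWithin [Fintype E] (G : Multigraph V E) (A : Finset V) : Finset E :=
  univ.filter fun x => G.src x ∈ A ∧ G.tgt x ∈ A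

/-- The edges with one end in `A` and the other end in `B`. -/
noncomputable def edgesBetween [Fintype E] (G : Multigraph V E) (A B : Finset V) : Finset E :=
  univ.filter fun x => G.Links x A B

/-- The vertices of `A` that have an edge into `B`. -/
noncomputable def attachedTo [Fintype E] (G : Multigraph V E) (A B : Finset V) : Finset V :=
  A.filter fun v => 0 < G.dartCount {v} B

variable {G : Multigraph V E} {A B C D A' B' : Finset V} {x : E} {v : V}

lemma Links.symm (h : G.Links x A B) : G.Links x B A := Or.symm h

lemma Links.mono (h : G.Links x A B) (hA : A ⊆ A') (hB : B ⊆ B') : G.Links x A' B' :=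
  h.imp (And.imp (@hA _) (@hB _)) (And.imp (@hB _) (@hA _))

lemma Links.src_mem_iff_not_tgt_mem (h : G.Links x A B) (hd : Disjoint A B) :
    G.src x ∈ A ↔ G.tgt x ∉ A := by
  have hA := fun v (hv : v ∈ A) => disjoint_left.1 hd hv
  have := hA (G.src x)
  have := hA (G.tgt x)
  unfold Links at h
  tauto

variable [Fintype E]

@[simp] lemma mem_edgesWithin : x ∈ G.edgesWithin A ↔ G.src x ∈ A ∧ G.tgt x ∈ A := by
  simp [edgesWithin]

@[simp] lemma mem_edgesBetween : x ∈ G.edgesBetween A B ↔ G.Links x A B := by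
  simp [edgesBetween]

lemma edgesWithin_mono (h : A ⊆ B) : G.edgesWithin A ⊆ G.edgesWithin B := by
  intro x hx
  rw [mem_edgesWithin] at *
  exact ⟨h hx.1, h hx.2⟩

lemma Links.notMem_edgesWithin (h : G.Links x A B) (hd : Disjoint A B) : x ∉ G.edgesWithin A := by
  have := h.src_mem_iff_not_tgt_mem hd
  rw [mem_edgesWithin]
  tauto

lemma edgesBetween_subset_edgesWithin : G.edgesBetween A B ⊆ G.edgesWithin (A ∪ B) := by
  intro x hx
  simp only [mem_edgesBetween, Links, mem_edgesWithin, mem_union] at hx ⊢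
  tauto

@[simp] lemma mem_attachedTo : v ∈ G.attachedTo A B ↔ v ∈ A ∧ 0 < G.dartCount {v} B := by
  simp [attachedTo]

lemma attachedTo_subset : G.attachedTo A B ⊆ A := filter_subset _ _

lemma dartCount_comm (A B : Finset V) : G.dartCount A B = G.dartCount B A :=
  sum_congr rfl fun _ _ => add_comm _ _

@[simp] lemma dartCount_empty (C : Finset V) : G.dartCount ∅ C = 0 := by simp [dartCount]

lemma dartCount_union (h : Disjoint A B) (C : Finset V) :
    G.dartCount (A ∪ B) C = G.dartCount A C + G.dartCount B C := by
  unfold dartCount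
  rw [← sum_add_distrib]
  refine sum_congr rfl fun x _ => ?_
  have hA := fun v (hv : v ∈ A) => disjoint_left.1 h hv
  have := hA (G.src x)
  have := hA (G.tgt x)
  simp only [mem_union]
  split_ifs <;> simp_all

lemma dartCount_union_right (h : Disjoint A B) (C : Finset V) :
    G.dartCount C (A ∪ B) = G.dartCount C A + G.dartCount C B := by
  rw [dartCount_comm, dartCount_union h, dartCount_comm A, dartCount_comm B]

lemma dartCount_add_sdiff (h : A ⊆ B) (C : Finset V) :
    G.dartCount A C + G.dartCount (B \ A) C = G.dartCount B C := by
  rw [← dartCount_union disjoint_sdiff, union_sdiff_of_subset h]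

lemma dartCount_add_sdiff_right (h : A ⊆ B) (C : Finset V) :
    G.dartCount C A + G.dartCount C (B \ A) = G.dartCount C B := by
  rw [← dartCount_union_right disjoint_sdiff, union_sdiff_of_subset h]

lemma dartCount_mono (hA : A ⊆ A') (hB : B ⊆ B') : G.dartCount A B ≤ G.dartCount A' B' := by
  rw [← dartCount_add_sdiff hA, ← dartCount_add_sdiff_right hB A]
  omega

lemma dartCount_pos : 0 < G.dartCount A B ↔ ∃ x, G.Links x A B := by
  unfold dartCount Links
  rw [sum_pos_iff]
  refine exists_congr fun x => ?_
  simp only [mem_univ, true_and]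
  split_ifs <;> simp_all

lemma dartCount_eq_sum (A B : Finset V) : G.dartCount A B = ∑ a ∈ A, G.dartCount {a} B := by
  induction A using Finset.induction_on with
  | empty => simp
  | insert a s ha ih =>
    rw [sum_insert ha, ← ih, insert_eq, dartCount_union (by simpa using ha)]

lemma dartCount_singleton_eq_of_le {k : ℕ} (h : ∀ a ∈ A, k ≤ G.dartCount {a} B)
    (hle : G.dartCount A B ≤ A.card * k) (hv : v ∈ A) : G.dartCount {v} B = k := by
  rw [dartCount_eq_sum, ← smul_eq_mul, ← sum_const] at hle
  exact ((sum_eq_sum_iff_of_le h).1 (le_antisymm (sum_le_sum h) hle) v hv).symm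

lemma exists_dartCount_pos (h : 0 < G.dartCount A B) : ∃ a ∈ A, 0 < G.dartCount {a} B := by
  rwa [dartCount_eq_sum, sum_pos_iff] at h

lemma card_le_dartCount (h : ∀ a ∈ A, 0 < G.dartCount {a} B) : A.card ≤ G.dartCount A B := by
  rw [dartCount_eq_sum, card_eq_sum_ones]
  exact sum_le_sum h

lemma dartCount_eq_card_attachedTo (h : ∀ a ∈ A, G.dartCount {a} B ≤ 1) :
    G.dartCount A B = (G.attachedTo A B).card := by
  rw [dartCount_eq_sum, attachedTo, card_filter]
  refine sum_congr rfl fun a ha => ?_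
  have := h a ha
  split_ifs <;> omega

lemma card_attachedTo_le : (G.attachedTo A B).card ≤ G.dartCount A B :=
  (card_le_dartCount fun _ hv => (mem_attachedTo.1 hv).2).trans
    (dartCount_mono attachedTo_subset subset_rfl)

lemma dartCount_eq_card_edgesBetween (h : Disjoint A B) :
    G.dartCount A B = (G.edgesBetween A B).card := by
  rw [dartCount, edgesBetween, card_filter]
  refine sum_congr rfl fun x _ => ?_
  have hA := fun v (hv : v ∈ A) => disjoint_left.1 h hv
  have := hA (G.src x)
  have := hA (G.tgt x)
  unfold Links
  split_ifs <;> first | rfl | (exfalso; tauto)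

lemma dartCount_self (A : Finset V) : G.dartCount A A = 2 * (G.edgesWithin A).card := by
  rw [dartCount, edgesWithin, card_filter, mul_sum]
  exact sum_congr rfl fun x _ => by split_ifs <;> rfl

variable [Fintype V]

lemma dartCount_univ_univ (G : Multigraph V E) : G.dartCount univ univ = 2 * Fintype.card E := by
  rw [dartCount_self, ← card_univ]
  congr 2
  ext x
  simp

lemma dartCount_add_compl (A B : Finset V) :
    G.dartCount A B + G.dartCount A Bᶜ = G.dartCount A univ := by
  rw [compl_eq_univ_sdiff, dartCount_add_sdiff_right (subset_univ B)]

lemma dartCount_sdiff_add_compl (A : Finset V) (h : B ⊆ D) :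
    G.dartCount A (D \ B) + G.dartCount A Dᶜ = G.dartCount A Bᶜ := by
  rw [← dartCount_union_right (disjoint_compl_right.mono_left sdiff_subset)]
  congr 1
  grind [Finset.mem_compl]

end Counting

section Connectivity

variable {V E : Type}

/-- The subgraph induced on the nonempty set `A` is connected after deleting the edges in `S`.
Connectedness is expressed by cuts: some edge outside `S` links any proper part of `A` to the
remainder. -/
def ConnectedAvoiding (G : Multigraph V E) (S : Finset E) (A : Finset V) : Prop :=
  A.Nonempty ∧ ∀ B ⊆ A, B.Nonempty → B ≠ A → ∃ x ∉ S, G.Links x B (A \ B)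

/-- The subgraph induced on the nonempty set `A` is connected. -/
def ConnectedSet (G : Multigraph V E) (A : Finset V) : Prop := G.ConnectedAvoiding ∅ A

/-- The vertex set of the connected component of `v` in the subgraph induced on `A`. It is empty
if `v ∉ A`. -/
noncomputable def component (G : Multigraph V E) (A : Finset V) (v : V) : Finset V :=
  A.filter fun u => ∃ C ⊆ A, G.ConnectedSet C ∧ v ∈ C ∧ u ∈ C

variable {G : Multigraph V E} {S S' : Finset E} {A B C Y : Finset V} {s t u v w : V}

lemma ConnectedAvoiding.singleton (S : Finset E) (a : V) : G.ConnectedAvoiding S {a} :=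
  ⟨singleton_nonempty a, fun _ hB hne hn => absurd (hne.subset_singleton_iff.1 hB) hn⟩

lemma ConnectedSet.singleton (a : V) : G.ConnectedSet {a} := ConnectedAvoiding.singleton _ a

lemma ConnectedAvoiding.of_root (hv : v ∈ A)
    (h : ∀ C ⊆ A, v ∈ C → C ≠ A → ∃ x ∉ S, G.Links x C (A \ C)) : G.ConnectedAvoiding S A := by
  refine ⟨⟨v, hv⟩, fun B hB hne hn => ?_⟩
  by_cases hvB : v ∈ B
  · exact h B hB hvB hn
  · obtain ⟨x, hx, hl⟩ := h (A \ B) sdiff_subset (by simp [hv, hvB]) (by grind)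
    exact ⟨x, hx, hl.symm.mono (by grind) subset_rfl⟩

lemma ConnectedAvoiding.anti (h : G.ConnectedAvoiding S A)
    (hS : ∀ x ∈ S', G.src x ∈ A → G.tgt x ∈ A → x ∈ S) : G.ConnectedAvoiding S' A := by
  refine ⟨h.1, fun B hB hne hn => ?_⟩
  obtain ⟨x, hx, hl⟩ := h.2 B hB hne hn
  exact ⟨x, fun hx' => hx (hS x hx' (by unfold Links at hl; grind) (by unfold Links at hl; grind)),
    hl⟩

lemma ConnectedAvoiding.connectedSet (h : G.ConnectedAvoiding S A) : G.ConnectedSet A :=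
  h.anti (by simp)

/-- The common core of the gluing lemmas below: a cut of `A ∪ B` that does not separate `A` need
only be crossed when it contains all of `A`. -/
lemma ConnectedAvoiding.union (hA : G.ConnectedAvoiding S A)
    (h : ∀ C ⊆ A ∪ B, A ⊆ C → C ≠ A ∪ B → ∃ x ∉ S, G.Links x C ((A ∪ B) \ C)) :
    G.ConnectedAvoiding S (A ∪ B) := by
  obtain ⟨a, ha⟩ := hA.1
  refine ConnectedAvoiding.of_root (v := a) (by simp [ha]) fun C hC haC hn => ?_
  by_cases hAC : A ⊆ C
  · exact h C hC hAC hn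
  · obtain ⟨x, hx, hl⟩ := hA.2 (C ∩ A) inter_subset_right ⟨a, by grind⟩
      fun he => hAC (he ▸ inter_subset_left)
    exact ⟨x, hx, hl.mono inter_subset_left (by grind)⟩

lemma ConnectedAvoiding.union_of_mem (hA : G.ConnectedAvoiding S A) (hB : G.ConnectedAvoiding S B)
    (hvA : v ∈ A) (hvB : v ∈ B) : G.ConnectedAvoiding S (A ∪ B) := by
  refine hA.union fun C hC hAC hn => ?_
  obtain ⟨x, hx, hl⟩ := hB.2 (C ∩ B) inter_subset_right ⟨v, by grind⟩ (by grind)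
  exact ⟨x, hx, hl.mono inter_subset_left (by grind)⟩

lemma ConnectedAvoiding.union_of_forall_links (hA : G.ConnectedAvoiding S A)
    (h : ∀ b ∈ B, ∃ x ∉ S, G.Links x {b} A) : G.ConnectedAvoiding S (A ∪ B) := by
  refine hA.union fun C hC hAC hn => ?_
  obtain ⟨b, hb, hbC⟩ : ∃ b ∈ B, b ∉ C := by
    by_contra! hBC
    exact hn (subset_antisymm hC (union_subset hAC hBC))
  obtain ⟨x, hx, hl⟩ := h b hb
  exact ⟨x, hx, hl.symm.mono hAC (by simp [hb, hbC])⟩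

lemma ConnectedAvoiding.union_of_links {x : E} (hA : G.ConnectedAvoiding S A)
    (hB : G.ConnectedAvoiding S B) (hx : x ∉ S) (hl : G.Links x A B) :
    G.ConnectedAvoiding S (A ∪ B) := by
  obtain ⟨b, hb, hlb⟩ : ∃ b ∈ B, G.Links x {b} A := by
    rcases hl with ⟨hs, ht⟩ | ⟨hs, ht⟩
    · exact ⟨_, ht, Or.inr ⟨hs, mem_singleton_self _⟩⟩
    · exact ⟨_, hs, Or.inl ⟨mem_singleton_self _, ht⟩⟩
  have hAb : G.ConnectedAvoiding S (A ∪ {b}) :=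
    hA.union_of_forall_links fun _ h => ⟨x, hx, mem_singleton.1 h ▸ hlb⟩
  have := hAb.union_of_mem hB (mem_union_right A (mem_singleton_self b)) hb
  rwa [union_assoc, ← insert_eq, insert_eq_self.2 hb] at this

lemma ConnectedSet.union_of_mem (hA : G.ConnectedSet A) (hB : G.ConnectedSet B)
    (hvA : v ∈ A) (hvB : v ∈ B) : G.ConnectedSet (A ∪ B) :=
  ConnectedAvoiding.union_of_mem hA hB hvA hvB

lemma mem_component : u ∈ G.component A v ↔ ∃ C ⊆ A, G.ConnectedSet C ∧ v ∈ C ∧ u ∈ C := by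
  simp only [component, mem_filter, and_iff_right_iff_imp]
  rintro ⟨C, hC, -, -, hu⟩
  exact hC hu

lemma component_subset (A : Finset V) (v : V) : G.component A v ⊆ A := filter_subset _ _

lemma mem_component_self (h : v ∈ A) : v ∈ G.component A v :=
  mem_component.2 ⟨{v}, by simpa using h, ConnectedSet.singleton v, by simp, by simp⟩

lemma mem_component_comm : u ∈ G.component A v ↔ v ∈ G.component A u := by
  simp only [mem_component, and_comm (a := v ∈ _)]

lemma subset_component (hC : C ⊆ A) (hc : G.ConnectedSet C) (hu : u ∈ C)
    (huv : u ∈ G.component A v) : C ⊆ G.component A v := by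
  obtain ⟨D, hD, hDc, hvD, huD⟩ := mem_component.1 huv
  exact fun y hy => mem_component.2 ⟨C ∪ D, union_subset hC hD, hc.union_of_mem hDc hu huD,
    mem_union_right _ hvD, mem_union_left _ hy⟩

lemma connectedSet_component (h : v ∈ A) : G.ConnectedSet (G.component A v) := by
  refine ConnectedAvoiding.of_root (mem_component_self h) fun C hC hv hn => ?_
  obtain ⟨u, hu, huC⟩ : ∃ u ∈ G.component A v, u ∉ C := by
    by_contra! hle
    exact hn (subset_antisymm hC hle)
  obtain ⟨D, hD, hDc, hvD, huD⟩ := mem_component.1 hu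
  have hDA : D ⊆ G.component A v := subset_component hD hDc hvD (mem_component_self h)
  obtain ⟨x, hx, hl⟩ := hDc.2 (C ∩ D) inter_subset_right ⟨v, by grind⟩ (by grind)
  exact ⟨x, hx, hl.mono inter_subset_left (by grind)⟩

lemma component_eq_of_mem (h : u ∈ G.component A v) : G.component A u = G.component A v := by
  have hu := component_subset _ _ h
  have hv := component_subset _ _ (mem_component_comm.1 h)
  exact subset_antisymm
    (subset_component (component_subset _ _) (connectedSet_component hu) (mem_component_self hu) h)
    (subset_component (component_subset _ _) (connectedSet_component hv) (mem_component_self hv)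
      (mem_component_comm.1 h))

lemma disjoint_component (h : t ∉ G.component A s) :
    Disjoint (G.component A s) (G.component A t) :=
  disjoint_left.2 fun _ hs ht =>
    h (component_eq_of_mem hs ▸ mem_component_comm.1 ht)

variable [Fintype E]

lemma connectedSet_iff : G.ConnectedSet A ↔
    A.Nonempty ∧ ∀ B ⊆ A, B.Nonempty → B ≠ A → 0 < G.dartCount B (A \ B) := by
  simp [ConnectedSet, ConnectedAvoiding, dartCount_pos]

lemma ConnectedSet.dartCount_pos (h : G.ConnectedSet A) (hB : B ⊆ A) (hne : B.Nonempty)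
    (hn : B ≠ A) : 0 < G.dartCount B (A \ B) :=
  (connectedSet_iff.1 h).2 B hB hne hn

lemma ConnectedSet.union_of_dartCount_pos (hA : G.ConnectedSet A) (hB : G.ConnectedSet B)
    (h : 0 < G.dartCount A B) : G.ConnectedSet (A ∪ B) := by
  obtain ⟨x, hx⟩ := Multigraph.dartCount_pos.1 h
  exact ConnectedAvoiding.union_of_links hA hB (notMem_empty x) hx

lemma dartCount_component_sdiff (h : v ∈ A) :
    G.dartCount (G.component A v) (A \ G.component A v) = 0 := by
  by_contra h0
  rw [dartCount_comm] at h0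
  obtain ⟨u, hu, hpos⟩ := exists_dartCount_pos (Nat.pos_of_ne_zero h0)
  rw [mem_sdiff] at hu
  rw [dartCount_comm] at hpos
  refine hu.2 (mem_component.2 ⟨G.component A v ∪ {u},
    union_subset (component_subset A v) (by simpa using hu.1), ?_,
    mem_union_left _ (mem_component_self h), mem_union_right _ (mem_singleton_self u)⟩)
  exact (connectedSet_component h).union_of_dartCount_pos (ConnectedSet.singleton u) hpos

lemma dartCount_component_erase (hY : w ∈ Y) (hs : s ∈ Y.erase w) :
    G.dartCount (G.component (Y.erase w) s) (Y \ G.component (Y.erase w) s) =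
      G.dartCount (G.component (Y.erase w) s) {w} := by
  have hsub := component_subset (G := G) (Y.erase w) s
  have heq : Y \ G.component (Y.erase w) s = {w} ∪ (Y.erase w \ G.component (Y.erase w) s) := by
    grind
  rw [heq, dartCount_union_right (by simp), dartCount_component_sdiff hs, add_zero]

lemma ConnectedSet.dartCount_component_erase_pos (hY : G.ConnectedSet Y) (hw : w ∈ Y)
    (hs : s ∈ Y.erase w) : 0 < G.dartCount (G.component (Y.erase w) s) {w} := by
  have hsub := component_subset (G := G) (Y.erase w) s
  rw [← dartCount_component_erase hw hs]
  exact hY.dartCount_pos (hsub.trans (erase_subset _ _)) ⟨s, mem_component_self hs⟩ (by grind)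

/-- Two components of `Y \ {w}` would receive `2 * k` darts from `w`. -/
lemma connectedSet_erase {k : ℕ} (hne : (Y.erase w).Nonempty)
    (hk : ∀ s ∈ Y.erase w, k ≤ G.dartCount (G.component (Y.erase w) s) {w})
    (h : G.dartCount {w} (Y.erase w) < 2 * k) : G.ConnectedSet (Y.erase w) := by
  obtain ⟨s, hs⟩ := hne
  suffices heq : G.component (Y.erase w) s = Y.erase w from heq ▸ connectedSet_component hs
  refine subset_antisymm (component_subset _ _) fun t ht => ?_
  by_contra hts
  have hle := dartCount_mono (G := G) (A := G.component (Y.erase w) s ∪ G.component (Y.erase w) t)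
    (union_subset (component_subset _ _) (component_subset _ _)) (subset_refl {w})
  rw [dartCount_union (disjoint_component hts), dartCount_comm (Y.erase w)] at hle
  have := hk s hs
  have := hk t ht
  omega

lemma ConnectedSet.erase_of_leaf (hY : G.ConnectedSet Y) (hw : w ∈ Y)
    (h : G.dartCount {w} (Y.erase w) ≤ 1) (hne : (Y.erase w).Nonempty) :
    G.ConnectedSet (Y.erase w) :=
  connectedSet_erase (k := 1) hne (fun _ hs => hY.dartCount_component_erase_pos hw hs) (by omega)

lemma ConnectedSet.exists_subset_card_eq (hA : G.ConnectedSet A) {k : ℕ} (hk : k + 1 ≤ A.card) :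
    ∃ C ⊆ A, C.card = k + 1 ∧ 2 * k ≤ G.dartCount C C := by
  induction k with
  | zero =>
    obtain ⟨a, ha⟩ := hA.1
    exact ⟨{a}, by simpa using ha, by simp, by simp⟩
  | succ k ih =>
    obtain ⟨C, hC, hcard, hcount⟩ := ih (by omega)
    have hpos := hA.dartCount_pos hC (card_pos.1 (by omega)) (by rintro rfl; omega)
    rw [dartCount_comm] at hpos
    obtain ⟨a, ha, hpa⟩ := exists_dartCount_pos hpos
    rw [mem_sdiff] at ha
    have hd : Disjoint {a} C := by simpa using ha.2
    refine ⟨{a} ∪ C, by grind, by rw [card_union_of_disjoint hd, card_singleton]; omega, ?_⟩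
    rw [dartCount_union hd, dartCount_union_right hd, dartCount_union_right hd,
      dartCount_comm C {a}]
    omega

/-- A spanning tree has `A.card - 1` edges. -/
lemma ConnectedSet.two_mul_card_le (h : G.ConnectedSet A) :
    2 * A.card ≤ G.dartCount A A + 2 := by
  have hpos := h.1.card_pos
  obtain ⟨C, hC, -, hcount⟩ := h.exists_subset_card_eq (k := A.card - 1) (by omega)
  have := dartCount_mono (G := G) hC hC
  omega

end Connectivity

lemma ConnectedSet.sdiff_component {V E : Type} [Finite E] {G : Multigraph V E} {Y : Finset V}
    {s w : V} (hY : G.ConnectedSet Y) (hw : w ∈ Y) (hs : s ∈ Y.erase w) :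
    G.ConnectedSet (Y \ G.component (Y.erase w) s) := by
  cases nonempty_fintype E
  set K := G.component (Y.erase w) s
  have hsub : K ⊆ Y.erase w := component_subset _ _
  refine ConnectedAvoiding.of_root (v := w) (by grind) fun C hC hwC hn => ?_
  set R := (Y \ K) \ C
  have hR : R.Nonempty := by
    rw [sdiff_nonempty]
    exact fun h => hn (subset_antisymm hC h)
  have hcut := hY.dartCount_pos (B := R) (by grind) hR (by grind)
  have hK : G.dartCount K (Y.erase w \ K) = 0 := dartCount_component_sdiff hs
  have hKR : G.dartCount R K = 0 := by
    have hle := dartCount_mono (G := G) (subset_refl K) (show R ⊆ Y.erase w \ K by grind)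
    rw [dartCount_comm]
    omega
  rw [show Y \ R = C ∪ K by grind, dartCount_union_right (by grind [Finset.disjoint_left]), hKR,
    add_zero, dartCount_comm] at hcut
  obtain ⟨x, hx⟩ := Multigraph.dartCount_pos.1 hcut
  exact ⟨x, notMem_empty x, hx⟩

/-! ### Ears of cubic graphs -/

section Cubic

variable {V E : Type} [Fintype V] [Fintype E]

/-- Every edge cut consists of at least three edges. -/
def ThreeLeCuts (G : Multigraph V E) : Prop :=
  ∀ A : Finset V, A.Nonempty → A ≠ univ → 3 ≤ G.dartCount A Aᶜ

/-- A cubic 3-edge-connected graph with at least two vertices, in terms of dart counts. -/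
structure CubicThreeEdgeConnected (G : Multigraph V E) : Prop where
  cubic : ∀ v, G.dartCount {v} univ = 3
  three_le_cut : G.ThreeLeCuts
  two_le_card : 2 ≤ Fintype.card V

variable {G : Multigraph V E} {D Y K : Finset V} {v : V}

lemma dartCount_univ_eq (A : Finset V) (h : Y ⊆ D) :
    G.dartCount A univ = G.dartCount A Y + G.dartCount A (D \ Y) + G.dartCount A Dᶜ := by
  rw [dartCount_add_sdiff_right h, dartCount_add_compl]

lemma CubicThreeEdgeConnected.dartCount_univ (hG : G.CubicThreeEdgeConnected) (A : Finset V) :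
    G.dartCount A univ = 3 * A.card := by
  rw [dartCount_eq_sum, sum_congr rfl fun v _ => hG.cubic v, sum_const, smul_eq_mul, mul_comm]

lemma CubicThreeEdgeConnected.dartCount_self (hG : G.CubicThreeEdgeConnected) (v : V) :
    G.dartCount {v} {v} = 0 := by
  have hne : ({v} : Finset V) ≠ univ := fun h => by
    have := hG.two_le_card
    have := congrArg card h
    simp only [card_singleton, card_univ] at this
    omega
  have := hG.three_le_cut {v} (singleton_nonempty v) hne
  have := hG.cubic v
  have := dartCount_add_compl (G := G) {v} {v}
  omega

lemma CubicThreeEdgeConnected.three_le_dartCount_add (hG : G.CubicThreeEdgeConnected) (hK : K ⊆ D)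
    (hne : K.Nonempty) (hu : K ≠ univ) : 3 ≤ G.dartCount K (D \ K) + G.dartCount K Dᶜ := by
  rw [dartCount_sdiff_add_compl K hK]
  exact hG.three_le_cut K hne hu

lemma CubicThreeEdgeConnected.dartCount_compl_le_two (hG : G.CubicThreeEdgeConnected) (hY : Y ⊆ D)
    (hc : G.ConnectedSet Y) (hn : ∀ y ∈ Y, 0 < G.dartCount {y} (D \ Y)) :
    G.dartCount Y Dᶜ ≤ 2 := by
  have := hc.two_mul_card_le
  have := card_le_dartCount hn
  have := hG.dartCount_univ Y
  have := dartCount_univ_eq (G := G) Y hY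
  omega

lemma CubicThreeEdgeConnected.dartCount_compl_le_one (hG : G.CubicThreeEdgeConnected)
    (hD : G.ConnectedSet D) (hv : v ∈ D) (hne : (D.erase v).Nonempty)
    (h1 : G.dartCount {v} (D.erase v) ≠ 1) : G.dartCount {v} Dᶜ ≤ 1 := by
  have hpos := hD.dartCount_pos (singleton_subset_iff.2 hv) (singleton_nonempty v)
    (by rintro rfl; simp at hne)
  have := dartCount_univ_eq (G := G) {v} (singleton_subset_iff.2 hv)
  have := hG.cubic v
  rw [sdiff_singleton_eq_erase] at *
  omega

end Cubic

section Part

variable {V E : Type}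

/-- `Y` and its complement in `D` form a partition of `D` into two connected parts. -/
structure IsPart (G : Multigraph V E) (D Y : Finset V) : Prop where
  subset : Y ⊆ D
  connected : G.ConnectedSet Y
  connected_sdiff : G.ConnectedSet (D \ Y)

/-- A part of `D` that contains the terminal `s` and another terminal. -/
structure IsTerminalPart (G : Multigraph V E) (D B : Finset V) (s : V) (Y : Finset V) : Prop
    extends G.IsPart D Y where
  mem : s ∈ Y
  exists_mem : ∃ b ∈ B, b ∈ Y ∧ b ≠ s

variable {G : Multigraph V E} {D B Y K : Finset V} {a b s t w w' x y : V}

lemma IsPart.ne_univ [Fintype V] (h : G.IsPart D Y) (hK : K ⊆ Y) : K ≠ univ := by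
  rintro rfl
  obtain ⟨u, hu⟩ := h.connected_sdiff.1
  exact (mem_sdiff.1 hu).2 (hK (mem_univ u))

variable [Fintype E]

lemma IsPart.component (h : G.IsPart D Y) (hw : w ∈ G.attachedTo Y (D \ Y)) (ht : t ∈ Y.erase w) :
    G.IsPart D (G.component (Y.erase w) t) := by
  rw [mem_attachedTo] at hw
  have hsub := component_subset (G := G) (Y.erase w) t
  have hYD := h.subset
  refine ⟨by grind, connectedSet_component ht, ?_⟩
  rw [show D \ G.component (Y.erase w) t = (D \ Y) ∪ (Y \ G.component (Y.erase w) t) by grind]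
  refine h.connected_sdiff.union_of_dartCount_pos (h.connected.sdiff_component hw.1 ht) ?_
  rw [dartCount_comm]
  exact hw.2.trans_le (dartCount_mono (by grind) subset_rfl)

/-- Otherwise the side of `w` that contains `a`, together with `K`, is connected and avoids `w'`. -/
lemma ConnectedSet.eq_of_notMem_component (hY : G.ConnectedSet Y) (hK : G.ConnectedSet K)
    (hy : y ∈ K) (hw : K ⊆ Y.erase w) (hw' : K ⊆ Y.erase w') (hwY : w ∈ Y) (hwY' : w' ∈ Y)
    (hwK : 0 < G.dartCount {w} K) (hwK' : 0 < G.dartCount {w'} K) (ha : a ∈ Y)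
    (haw : a ∉ G.component (Y.erase w) y) (haw' : a ∉ G.component (Y.erase w') y) : w = w' := by
  by_contra hne
  set Z := G.component (Y.erase w) y
  have hZ : Z ⊆ Y.erase w := component_subset _ _
  have hwZ : w' ∈ Z := by
    refine subset_component (C := {w'} ∪ K) (by grind)
      ((ConnectedSet.singleton w').union_of_dartCount_pos hK hwK') (mem_union_right _ hy)
      (mem_component_self (hw hy)) (by simp)
  have hc : G.ConnectedSet ((Y \ Z) ∪ K) :=
    (hY.sdiff_component hwY (hw hy)).union_of_dartCount_pos hK
      (hwK.trans_le (dartCount_mono (by grind) subset_rfl))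
  exact haw' (subset_component (by grind) hc (mem_union_right _ hy) (mem_component_self (hw' hy))
    (mem_union_left _ (mem_sdiff.2 ⟨ha, haw⟩)))

lemma eq_of_mem_component_of_minimal (hmin : Minimal (G.IsTerminalPart D B s) Y)
    (hw : w ∈ G.attachedTo Y (D \ Y)) (hs : s ∈ G.component (Y.erase w) t) (hx : x ∈ B)
    (hxC : x ∈ G.component (Y.erase w) t) : x = s := by
  by_contra hne
  have ht := component_subset _ _ (mem_component_comm.1 hs)
  have hsub := component_subset (G := G) (Y.erase w) t
  have hle := hmin.2 (y := G.component (Y.erase w) t)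
    ⟨hmin.1.toIsPart.component hw ht, hs, x, hx, hxC, hne⟩ (hsub.trans (erase_subset _ _))
  exact notMem_erase w Y (hsub (hle (mem_attachedTo.1 hw).1))

lemma dartCount_component_sdiff_attachedTo (hY : Y ⊆ D) (hy : y ∈ Y \ G.attachedTo Y (D \ Y)) :
    G.dartCount (G.component (Y \ G.attachedTo Y (D \ Y)) y)
        (D \ G.component (Y \ G.attachedTo Y (D \ Y)) y) =
      G.dartCount (G.attachedTo Y (D \ Y)) (G.component (Y \ G.attachedTo Y (D \ Y)) y) := by
  set N := G.attachedTo Y (D \ Y) with hN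
  set K := G.component (Y \ N) y
  have hNY : N ⊆ Y := attachedTo_subset
  have hKN : K ⊆ Y \ N := component_subset _ _
  have hKU : G.dartCount K (D \ Y) = 0 := by
    rw [dartCount_eq_sum]
    refine sum_eq_zero fun z hz => ?_
    have := mem_sdiff.1 (hKN hz)
    rw [hN, mem_attachedTo] at this
    grind
  have hKr : G.dartCount K ((Y \ N) \ K) = 0 := dartCount_component_sdiff hy
  rw [show D \ K = N ∪ (((Y \ N) \ K) ∪ (D \ Y)) by grind,
    dartCount_union_right (by grind [Finset.disjoint_left]),
    dartCount_union_right (by grind [Finset.disjoint_left]), hKU, hKr,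
    add_zero, add_zero, dartCount_comm K N]

end Part

section TwoEdgeCore

variable {V E : Type} [Fintype E]

/-- The obstruction to splitting off an ear through the terminals `B`: a set `K` attached to the
rest of `D` by two edges, contained in a part `C₁` whose only terminal is `s` and in a part `C₂`
that contains a terminal but not `s`. -/
structure IsTwoEdgeCore (G : Multigraph V E) (D B : Finset V) (s : V) (K C₁ C₂ : Finset V) :
    Prop where
  nonempty : K.Nonempty
  cut : G.dartCount K (D \ K) = 2
  left : G.IsPart D C₁
  right : G.IsPart D C₂
  subset_left : K ⊆ C₁
  subset_right : K ⊆ C₂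
  mem_left : s ∈ C₁
  eq_of_mem_left : ∀ b ∈ B, b ∈ C₁ → b = s
  notMem_right : s ∉ C₂
  exists_mem_right : ∃ b ∈ B, b ∈ C₂

variable {G : Multigraph V E} {D B Y K C₁ C₂ : Finset V} {s w y : V}

lemma IsTwoEdgeCore.notMem {b : V} (h : G.IsTwoEdgeCore D B s K C₁ C₂) (hb : b ∈ K) : b ∉ B :=
  fun hbB => h.notMem_right (h.eq_of_mem_left b hbB (h.subset_left hb) ▸ h.subset_right hb)

/-- Each vertex of `Y` that separates `K` from the rest of `D` separates it from `s` or from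
another terminal `b`, and only one vertex can do either. -/
lemma exists_separators_of_minimal (hmin : Minimal (G.IsTerminalPart D B s) Y)
    (hK : G.ConnectedSet K) (hKY : K ⊆ Y \ G.attachedTo Y (D \ Y)) (hy : y ∈ K)
    (h2 : 2 ≤ (G.attachedTo (G.attachedTo Y (D \ Y)) K).card) :
    (G.attachedTo (G.attachedTo Y (D \ Y)) K).card = 2 ∧
      ∃ w₁ ∈ G.attachedTo Y (D \ Y), ∃ w₂ ∈ G.attachedTo Y (D \ Y),
        s ∈ G.component (Y.erase w₁) y ∧ s ∉ G.component (Y.erase w₂) y ∧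
        ∃ b ∈ B, b ∈ G.component (Y.erase w₂) y := by
  set N := G.attachedTo Y (D \ Y)
  have hNY : N ⊆ Y := attachedTo_subset
  have hY := hmin.1
  obtain ⟨b, hbB, hbY, hbs⟩ := hY.exists_mem
  have huniq : ∀ a ∈ Y, ∀ w ∈ G.attachedTo N K, ∀ w' ∈ G.attachedTo N K,
      a ∉ G.component (Y.erase w) y → a ∉ G.component (Y.erase w') y → w = w' := by
    intro a ha w hw w' hw' haw haw'
    rw [mem_attachedTo] at hw hw'
    exact hY.connected.eq_of_notMem_component hK hy (by grind) (by grind) (hNY hw.1) (hNY hw'.1)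
      hw.2 hw'.2 ha haw haw'
  have hsep : ∀ w ∈ G.attachedTo N K,
      s ∉ G.component (Y.erase w) y ∨ b ∉ G.component (Y.erase w) y := by
    intro w hw
    by_contra! h
    exact hbs (eq_of_mem_component_of_minimal hmin (attachedTo_subset hw) h.1 hbB h.2)
  have hle : (G.attachedTo N K).card ≤ 2 := by
    by_contra! h
    obtain ⟨u, hu, v, hv, w, hw, huv, huw, hvw⟩ := two_lt_card.1 h
    have := huniq s hY.mem
    have := huniq b hbY
    rcases hsep u hu with h₁ | h₁ <;> rcases hsep v hv with h₂ | h₂ <;>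
      rcases hsep w hw with h₃ | h₃ <;> grind
  obtain ⟨u, hu, v, hv, huv⟩ := one_lt_card.1 h2
  have := huniq s hY.mem
  have := huniq b hbY
  refine ⟨by omega, ?_⟩
  by_cases hsu : s ∈ G.component (Y.erase u) y
  · exact ⟨u, attachedTo_subset hu, v, attachedTo_subset hv, hsu, by grind, b, hbB, by grind⟩
  · exact ⟨v, attachedTo_subset hv, u, attachedTo_subset hu, by grind, hsu, b, hbB, by grind⟩

variable [Fintype V]

lemma IsTwoEdgeCore.exists_mem_attachedTo (hG : G.CubicThreeEdgeConnected)
    (h : G.IsTwoEdgeCore D B s K C₁ C₂) : ∃ v ∈ K, v ∈ G.attachedTo D Dᶜ := by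
  have hKD := h.subset_left.trans h.left.subset
  have := hG.three_le_dartCount_add hKD h.nonempty (h.left.ne_univ h.subset_left)
  have := h.cut
  obtain ⟨v, hv, hpos⟩ := exists_dartCount_pos (show 0 < G.dartCount K Dᶜ by omega)
  exact ⟨v, hv, mem_attachedTo.2 ⟨hKD hv, hpos⟩⟩

/-- With two darts into `K` the vertex `w` would have none left for the remainder of `Y`, and the
terminals would all lie in the component of `K`. -/
lemma dartCount_le_one_of_minimal (hG : G.CubicThreeEdgeConnected) (hB : B ⊆ G.attachedTo D Dᶜ)
    (hs : s ∈ B) (hmin : Minimal (G.IsTerminalPart D B s) Y) (hw : w ∈ G.attachedTo Y (D \ Y))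
    (hK : G.ConnectedSet K) (hKY : K ⊆ Y.erase w) : G.dartCount {w} K ≤ 1 := by
  by_contra! hlt
  obtain ⟨y, hy⟩ := hK.1
  obtain ⟨hwY, hwU⟩ := mem_attachedTo.1 hw
  have hY := hmin.1
  obtain ⟨b, hbB, hbY, hbs⟩ := hY.exists_mem
  have hsum := dartCount_univ_eq (G := G) {w} hY.subset
  have hsplit := dartCount_add_sdiff_right (G := G) hKY {w}
  have hle := dartCount_mono (G := G) (subset_refl {w}) (erase_subset w Y)
  have hdeg := hG.cubic w
  have hwB : w ∉ B := fun h => by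
    have := (mem_attachedTo.1 (hB h)).2
    omega
  have hall : ∀ t ∈ Y.erase w, t ∈ G.component (Y.erase w) y := by
    intro t ht
    by_contra hty
    have hpos := hY.connected.dartCount_component_erase_pos hwY ht
    have hdisj := (disjoint_component hty).mono_left
      (subset_component hKY hK hy (mem_component_self (hKY hy)))
    have := dartCount_mono (G := G) (subset_refl {w})
      (subset_sdiff.2 ⟨component_subset (Y.erase w) t, hdisj.symm⟩)
    rw [dartCount_comm] at hpos
    omega
  exact hbs (eq_of_mem_component_of_minimal hmin hw
    (hall s (mem_erase.2 ⟨ne_of_mem_of_not_mem hs hwB, hY.mem⟩)) hbB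
    (hall b (mem_erase.2 ⟨ne_of_mem_of_not_mem hbB hwB, hbY⟩)))

lemma exists_isTwoEdgeCore_of_minimal (hG : G.CubicThreeEdgeConnected) (hD : G.ConnectedSet D)
    (hB : B ⊆ G.attachedTo D Dᶜ) (hs : s ∈ B) (hmin : Minimal (G.IsTerminalPart D B s) Y)
    (hcut : ∀ K ⊆ Y, G.dartCount K (D \ K) = 1 → s ∈ K ∧ ∃ b ∈ B, b ∈ K ∧ b ≠ s)
    (hy : y ∈ Y) (hy0 : G.dartCount {y} (D \ Y) = 0) :
    ∃ K C₁ C₂, C₁ ⊆ Y ∧ C₂ ⊆ Y ∧ G.IsTwoEdgeCore D B s K C₁ C₂ := by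
  set N := G.attachedTo Y (D \ Y)
  have hY := hmin.1.toIsPart
  have hyN : y ∈ Y \ N := mem_sdiff.2 ⟨hy, fun h => (mem_attachedTo.1 h).2.ne' hy0⟩
  set K := G.component (Y \ N) y
  have hKN : K ⊆ Y \ N := component_subset _ _
  have hK : G.ConnectedSet K := connectedSet_component hyN
  have hyK : y ∈ K := mem_component_self hyN
  have hKe : ∀ w ∈ N, K ⊆ Y.erase w := by grind
  have hKC : ∀ w ∈ N, K ⊆ G.component (Y.erase w) y := fun w hw =>
    subset_component (hKe w hw) hK hyK (mem_component_self (hKe w hw hyK))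
  have hcard : G.dartCount K (D \ K) = (G.attachedTo N K).card := by
    rw [dartCount_component_sdiff_attachedTo hY.subset hyN]
    exact dartCount_eq_card_attachedTo fun w hw =>
      dartCount_le_one_of_minimal hG hB hs hmin hw hK (hKe w hw)
  have hpos : 0 < G.dartCount K (D \ K) := by
    obtain ⟨u, hu⟩ := hY.connected_sdiff.1
    exact hD.dartCount_pos ((hKN.trans sdiff_subset).trans hY.subset) ⟨y, hyK⟩ (by grind)
  have hne1 : G.dartCount K (D \ K) ≠ 1 := fun h1 => by
    obtain ⟨hsK, x, hxB, hxK, hxs⟩ := hcut K (hKN.trans sdiff_subset) h1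
    obtain ⟨w, hw⟩ := card_pos.1 (hcard ▸ hpos)
    have hwN := attachedTo_subset hw
    exact hxs (eq_of_mem_component_of_minimal hmin hwN (hKC w hwN hsK) hxB (hKC w hwN hxK))
  obtain ⟨h2, w₁, hw₁, w₂, hw₂, hs₁, hs₂, hb⟩ :=
    exists_separators_of_minimal hmin hK hKN hyK (show 2 ≤ (G.attachedTo N K).card by omega)
  refine ⟨K, _, _, (component_subset _ _).trans (erase_subset w₁ Y),
    (component_subset _ _).trans (erase_subset w₂ Y), ⟨y, hyK⟩, hcard.trans h2,
    hY.component hw₁ (hKe w₁ hw₁ hyK), hY.component hw₂ (hKe w₂ hw₂ hyK), hKC w₁ hw₁, hKC w₂ hw₂,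
    hs₁, fun x hx hxC => eq_of_mem_component_of_minimal hmin hw₁ hs₁ hx hxC, hs₂, hb⟩

end TwoEdgeCore

section Ear

variable {V E : Type} [Fintype V] [Fintype E]

/-- A part `Y` of `D` that can be split off when flows are built up vertex set by vertex set: each
vertex of `Y` has a neighbour in the remainder of `D`, and at least two edges lead from `Y` to the
outside of `D`. -/
structure IsEar (G : Multigraph V E) (D Y : Finset V) : Prop extends G.IsPart D Y where
  attached : ∀ y ∈ Y, 0 < G.dartCount {y} (D \ Y)
  two_le_out : 2 ≤ G.dartCount Y Dᶜ

variable {G : Multigraph V E} {D B W Y K C₁ C₂ : Finset V} {a b d s t : V}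

lemma IsTerminalPart.isEar (h : G.IsTerminalPart D B s Y) (hB : B ⊆ G.attachedTo D Dᶜ)
    (hs : s ∈ B) (hY : ∀ y ∈ Y, 0 < G.dartCount {y} (D \ Y)) : G.IsEar D Y := by
  obtain ⟨b, hb, hbY, hbs⟩ := h.exists_mem
  refine ⟨h.toIsPart, hY, le_trans ?_ card_attachedTo_le⟩
  exact one_lt_card.2 ⟨s, mem_attachedTo.2 ⟨h.mem, (mem_attachedTo.1 (hB hs)).2⟩, b,
    mem_attachedTo.2 ⟨hbY, (mem_attachedTo.1 (hB hb)).2⟩, hbs.symm⟩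

lemma exists_isEar_or_isTwoEdgeCore (hG : G.CubicThreeEdgeConnected) (hD : G.ConnectedSet D)
    (hB : B ⊆ G.attachedTo D Dᶜ) (hs : s ∈ B)
    (hcut : ∀ K ⊆ W, G.dartCount K (D \ K) = 1 → s ∈ K ∧ ∃ b ∈ B, b ∈ K ∧ b ≠ s)
    (hW : G.IsTerminalPart D B s W) :
    (∃ Y ⊆ W, G.IsEar D Y ∧ G.IsTerminalPart D B s Y) ∨
      ∃ K C₁ C₂, C₁ ⊆ W ∧ C₂ ⊆ W ∧ G.IsTwoEdgeCore D B s K C₁ C₂ := by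
  obtain ⟨Y, hYW, hmin⟩ := exists_minimal_le_of_wellFoundedLT _ W hW
  by_cases hY : ∀ y ∈ Y, 0 < G.dartCount {y} (D \ Y)
  · exact Or.inl ⟨Y, hYW, hmin.1.isEar hB hs hY, hmin.1⟩
  · push Not at hY
    obtain ⟨y, hy, hy0⟩ := hY
    obtain ⟨K, C₁, C₂, h₁, h₂, h⟩ := exists_isTwoEdgeCore_of_minimal hG hD hB hs hmin
      (fun K hK => hcut K (hK.trans hYW)) hy (by omega)
    exact Or.inr ⟨K, C₁, C₂, h₁.trans hYW, h₂.trans hYW, h⟩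

lemma exists_isEar (hG : G.CubicThreeEdgeConnected) (hD : G.ConnectedSet D)
    (hs : s ∈ G.attachedTo D Dᶜ)
    (hcut : ∀ K ⊆ W, G.dartCount K (D \ K) = 1 →
      s ∈ K ∧ ∃ b ∈ G.attachedTo D Dᶜ, b ∈ K ∧ b ≠ s)
    (hW : G.IsTerminalPart D (G.attachedTo D Dᶜ) s W) :
    ∃ Y ⊆ W, G.IsEar D Y ∧ G.IsTerminalPart D (G.attachedTo D Dᶜ) s Y := by
  rcases exists_isEar_or_isTwoEdgeCore hG hD subset_rfl hs hcut hW with h | ⟨K, C₁, C₂, -, -, h⟩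
  · exact h
  · obtain ⟨v, hvK, hv⟩ := h.exists_mem_attachedTo hG
    exact absurd hv (h.notMem hvK)

lemma exists_isEar_of_dartCount_le_two (hG : G.CubicThreeEdgeConnected) (hD : G.ConnectedSet D)
    (hW : G.IsPart D W) (ha : a ∈ G.attachedTo W Dᶜ) (hb : b ∈ G.attachedTo W Dᶜ) (hab : a ≠ b)
    (h2 : G.dartCount W Dᶜ ≤ 2) : ∃ Y ⊆ W, G.IsEar D Y ∧ a ∈ Y ∧ b ∈ Y := by
  have hWD : G.attachedTo W Dᶜ ⊆ G.attachedTo D Dᶜ := filter_subset_filter _ hW.subset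
  have hW' : ∀ v ∈ G.attachedTo W Dᶜ, v = a ∨ v = b := by
    intro v hv
    by_contra! h
    have := (two_lt_card.2 ⟨v, hv, a, ha, b, hb, h.1, h.2, hab⟩).trans_le card_attachedTo_le
    omega
  have hcut : ∀ K ⊆ W, G.dartCount K (D \ K) = 1 → ∀ v ∈ G.attachedTo W Dᶜ, v ∈ K := by
    intro K hK h1 v hv
    by_contra hvK
    have hne : K.Nonempty := nonempty_iff_ne_empty.2 fun h => by simp [h] at h1
    have := hG.three_le_dartCount_add (hK.trans hW.subset) hne (hW.ne_univ hK)
    have := dartCount_add_sdiff (G := G) hK Dᶜ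
    rw [mem_attachedTo] at hv
    have := hv.2.trans_le (dartCount_mono (singleton_subset_iff.2 (mem_sdiff.2 ⟨hv.1, hvK⟩))
      subset_rfl)
    omega
  obtain ⟨Y, hYW, hY, hYt⟩ := exists_isEar hG hD (hWD ha)
    (fun K hK h1 => ⟨hcut K hK h1 a ha, b, hWD hb, hcut K hK h1 b hb, hab.symm⟩)
    ⟨hW, (mem_attachedTo.1 ha).1, b, hWD hb, (mem_attachedTo.1 hb).1, hab.symm⟩
  obtain ⟨b', hb', hb'Y, hne⟩ := hYt.exists_mem
  have := (hW' b' (mem_attachedTo.2 ⟨hYW hb'Y, (mem_attachedTo.1 hb').2⟩)).resolve_left hne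
  exact ⟨Y, hYW, hY, hYt.mem, this ▸ hb'Y⟩

lemma isPart_erase_of_bridgeless (hG : G.CubicThreeEdgeConnected) (hD : G.ConnectedSet D)
    (hd : d ∈ D) (hbr : ∀ K ⊆ D.erase d, G.dartCount K (D \ K) ≠ 1)
    (hne : (D.erase d).Nonempty) : G.IsPart D (D.erase d) := by
  refine ⟨erase_subset _ _, connectedSet_erase (k := 2) hne (fun s hs => ?_) ?_,
    (sdiff_erase_self hd).symm ▸ ConnectedSet.singleton d⟩
  · have := hD.dartCount_component_erase_pos hd hs
    have := hbr _ (component_subset (G := G) (D.erase d) s)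
    rw [dartCount_component_erase hd hs] at this
    omega
  · have := hG.cubic d
    have := dartCount_mono (G := G) (subset_refl {d}) (subset_univ (D.erase d))
    omega

lemma IsTwoEdgeCore.exists_two_isEar (hG : G.CubicThreeEdgeConnected) (hD : G.ConnectedSet D)
    (hbr : ∀ K ⊆ W, G.dartCount K (D \ K) ≠ 1) (hs : s ∈ G.attachedTo D Dᶜ) (hst : s ≠ t)
    (h : G.IsTwoEdgeCore D ((G.attachedTo D Dᶜ).erase t) s K C₁ C₂)
    (h₁ : C₁ ⊆ W) (h₂ : C₂ ⊆ W) :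
    ∃ Y ⊆ W, ∃ Y' ⊆ W, G.IsEar D Y ∧ G.IsEar D Y' ∧ Y ≠ Y' ∧ ∃ z, z ∈ Y ∧ z ∈ Y' := by
  obtain ⟨v, hvK, hv⟩ := h.exists_mem_attachedTo hG
  obtain rfl : v = t := by
    by_contra hvt
    exact h.notMem hvK (mem_erase.2 ⟨hvt, hv⟩)
  obtain ⟨b, hb, hbC⟩ := h.exists_mem_right
  rw [mem_erase] at hb
  obtain ⟨Y₁, hY₁, hear₁, hterm₁⟩ := exists_isEar hG hD hs
    (fun K hK h1 => absurd h1 (hbr K (hK.trans h₁)))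
    ⟨h.left, h.mem_left, v, hv, h.subset_left hvK, hst.symm⟩
  obtain ⟨Y₂, hY₂, hear₂, hterm₂⟩ := exists_isEar hG hD hv
    (fun K hK h1 => absurd h1 (hbr K (hK.trans h₂)))
    ⟨h.right, h.subset_right hvK, b, hb.2, hbC, hb.1⟩
  obtain ⟨c, hc, hcY, hcs⟩ := hterm₁.exists_mem
  obtain rfl : c = v := by
    by_contra hcv
    exact hcs (h.eq_of_mem_left c (mem_erase.2 ⟨hcv, hc⟩) (hY₁ hcY))
  refine ⟨Y₁, hY₁.trans h₁, Y₂, hY₂.trans h₂, hear₁, hear₂, ?_, c, hcY, hterm₂.mem⟩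
  rintro rfl
  exact h.notMem_right (hY₂ hterm₁.mem)

lemma exists_two_isEar_of_three_terminals (hG : G.CubicThreeEdgeConnected)
    (hD : G.ConnectedSet D) (hW : G.IsPart D W) (hbr : ∀ K ⊆ W, G.dartCount K (D \ K) ≠ 1)
    (h3 : 2 < (G.attachedTo W Dᶜ).card) :
    ∃ Y ⊆ W, ∃ Y' ⊆ W, G.IsEar D Y ∧ G.IsEar D Y' ∧ Y ≠ Y' ∧ ∃ z, z ∈ Y ∧ z ∈ Y' := by
  have hO : G.attachedTo W Dᶜ ⊆ G.attachedTo D Dᶜ := filter_subset_filter _ hW.subset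
  obtain ⟨s, hs, t, ht, r, hr, hst, hsr, htr⟩ := two_lt_card.1 h3
  have hsW := attachedTo_subset hs
  obtain ⟨Y₀, hY₀W, hear₀, hterm₀⟩ := exists_isEar hG hD (hO hs)
    (fun K hK h1 => absurd h1 (hbr K hK)) ⟨hW, hsW, t, hO ht, attachedTo_subset ht, hst.symm⟩
  obtain ⟨s', hs', hs'Y, hss'⟩ := hterm₀.exists_mem
  obtain ⟨r, hr, hrs, hrs'⟩ : ∃ r ∈ G.attachedTo W Dᶜ, r ≠ s ∧ r ≠ s' := by grind
  have hB : (G.attachedTo D Dᶜ).erase s' ⊆ G.attachedTo D Dᶜ := erase_subset _ _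
  rcases exists_isEar_or_isTwoEdgeCore hG hD hB (mem_erase.2 ⟨hss'.symm, hO hs⟩)
    (fun K hK h1 => absurd h1 (hbr K hK))
    ⟨hW, hsW, r, mem_erase.2 ⟨hrs', hO hr⟩, attachedTo_subset hr, hrs⟩ with
    ⟨Y, hYW, hear, hterm⟩ | ⟨K, C₁, C₂, h₁, h₂, hcore⟩
  · refine ⟨Y₀, hY₀W, Y, hYW, hear₀, hear, ?_, s, hterm₀.mem, hterm.mem⟩
    rintro rfl
    obtain ⟨b, hb, hbY, hbs⟩ := hterm.exists_mem
    have hYO : ∀ v ∈ G.attachedTo D Dᶜ, v ∈ Y₀ → v ∈ G.attachedTo Y₀ Dᶜ := fun v hv hvY =>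
      mem_attachedTo.2 ⟨hvY, (mem_attachedTo.1 hv).2⟩
    have := hG.dartCount_compl_le_two hear.subset hear.connected hear.attached
    have := (two_lt_card.2 ⟨s, hYO s (hO hs) hterm.mem, s', hYO s' hs' hs'Y, b,
      hYO b (hB hb) hbY, hss'.symm, hbs.symm, (ne_of_mem_erase hb).symm⟩).trans_le
      card_attachedTo_le
    omega
  · exact hcore.exists_two_isEar hG hD hbr (hO hs) hss'.symm h₁ h₂

lemma exists_two_isEar (hG : G.CubicThreeEdgeConnected) (hD : G.ConnectedSet D) (hd : d ∈ D)
    (hbr : ∀ K ⊆ D.erase d, G.dartCount K (D \ K) ≠ 1) (h4 : 4 ≤ G.dartCount D Dᶜ) :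
    ∃ Y ⊆ D.erase d, ∃ Y' ⊆ D.erase d,
      G.IsEar D Y ∧ G.IsEar D Y' ∧ Y ≠ Y' ∧ ∃ z, z ∈ Y ∧ z ∈ Y' := by
  have hsplit := dartCount_add_sdiff (G := G) (singleton_subset_iff.2 hd) Dᶜ
  rw [sdiff_singleton_eq_erase] at hsplit
  have hsd : D \ D.erase d = {d} := sdiff_erase_self hd
  have hne : (D.erase d).Nonempty := nonempty_iff_ne_empty.2 fun h => by
    have := hG.cubic d
    have := dartCount_mono (G := G) (subset_refl {d}) (subset_univ Dᶜ)
    rw [h, dartCount_empty] at hsplit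
    omega
  have hle : ∀ v ∈ D, G.dartCount {v} Dᶜ ≤ 1 := fun v hv => by
    rcases eq_or_ne v d with rfl | hvd
    · refine hG.dartCount_compl_le_one hD hv hne ?_
      rw [dartCount_comm, ← hsd]
      exact hbr _ subset_rfl
    · refine hG.dartCount_compl_le_one hD hv ⟨d, mem_erase.2 ⟨hvd.symm, hd⟩⟩ ?_
      rw [← sdiff_singleton_eq_erase]
      exact hbr {v} (by simp [hv, hvd])
  refine exists_two_isEar_of_three_terminals hG hD
    (isPart_erase_of_bridgeless hG hD hd hbr hne) hbr ?_
  rw [← dartCount_eq_card_attachedTo fun v hv => hle v (mem_of_mem_erase hv)]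
  have := hle d hd
  omega

end Ear

/-! ### Flows and flow bases -/

section Flow

variable {V E Γ : Type} [Fintype E] [AddCommGroup Γ]

/-- The boundary homomorphism: the flow out of `v` minus the flow into `v`, for all `v` at once. -/
noncomputable def netOutflow (G : Multigraph V E) : (E → Γ) →+ V → Γ where
  toFun φ v := (∑ x, if G.src x = v then φ x else 0) - ∑ x, if G.tgt x = v then φ x else 0
  map_zero' := by ext; simp
  map_add' φ ψ := by
    ext v
    simp only [Pi.add_apply, ← sum_filter, sum_add_distrib]
    abel

variable {G : Multigraph V E} {φ ψ : E → Γ} {x : E}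

lemma netOutflow_apply (φ : E → Γ) (v : V) : G.netOutflow φ v =
    (∑ x, if G.src x = v then φ x else 0) - ∑ x, if G.tgt x = v then φ x else 0 := rfl

lemma isFlow_iff : G.IsFlow φ ↔ G.netOutflow φ = 0 := by
  simp [IsFlow, funext_iff, netOutflow_apply, sub_eq_zero]

lemma netOutflow_single (x : E) (γ : Γ) :
    G.netOutflow (Pi.single x γ) = Pi.single (G.src x) γ - Pi.single (G.tgt x) γ := by
  ext v
  simp [netOutflow_apply, Pi.single_apply, ← sum_filter, sum_ite_eq', eq_comm (a := v)]

lemma isFlow_zero : G.IsFlow (0 : E → Γ) := isFlow_iff.2 (map_zero _)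

lemma IsFlow.add (hφ : G.IsFlow φ) (hψ : G.IsFlow ψ) : G.IsFlow (φ + ψ) := by
  rw [isFlow_iff] at *
  rw [map_add, hφ, hψ, add_zero]

lemma IsFlow.neg (hφ : G.IsFlow φ) : G.IsFlow (-φ) := by
  rw [isFlow_iff] at *
  rw [map_neg, hφ, neg_zero]

lemma IsFlow.sum {ι : Type*} (s : Finset ι) {φ : ι → E → Γ} (h : ∀ i ∈ s, G.IsFlow (φ i)) :
    G.IsFlow (∑ i ∈ s, φ i) :=
  sum_induction φ G.IsFlow (fun _ _ => IsFlow.add) isFlow_zero h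

lemma IsFlow.smul {R : Type} [Ring R] {φ : E → R} (hφ : G.IsFlow φ) (c : R) :
    G.IsFlow (c • φ) := by
  intro v
  have := congrArg (c * ·) (hφ v)
  simpa [mul_sum, mul_ite] using this

/-- The net flow across any cut is zero. -/
lemma IsFlow.eq_zero_of_bridge (hφ : G.IsFlow φ) {X : Finset V}
    (hx : ¬ (G.src x ∈ X ↔ G.tgt x ∈ X))
    (h : ∀ y, y ≠ x → φ y ≠ 0 → (G.src y ∈ X ↔ G.tgt y ∈ X)) : φ x = 0 := by
  have hnet : ∑ v ∈ X, G.netOutflow φ v =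
      ∑ y, ((if G.src y ∈ X then φ y else 0) - if G.tgt y ∈ X then φ y else 0) := by
    simp only [netOutflow_apply, sum_sub_distrib]
    congr 1 <;> (rw [sum_comm]; exact sum_congr rfl fun y _ => by simp)
  rw [isFlow_iff.1 hφ, sum_eq_single x] at hnet
  · by_cases hs : G.src x ∈ X <;> simp_all
  · intro y _ hy
    by_cases h0 : φ y = 0
    · simp [h0]
    · simp [h y hy h0]
  · simp

end Flow

section FlowExtension

variable {V E Γ : Type} [Fintype E] [AddCommGroup Γ] {G : Multigraph V E}
  {S T : Finset E} {A X Y : Finset V} {u v : V} {x e₀ e₁ : E}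

lemma ConnectedAvoiding.exists_netOutflow_eq (h : G.ConnectedAvoiding S A) (hu : u ∈ A)
    (hv : v ∈ A) (γ : Γ) : ∃ p : E → Γ, (∀ x ∉ G.edgesWithin A \ S, p x = 0) ∧
      G.netOutflow p = (Pi.single u γ - Pi.single v γ : V → Γ) := by
  let R (u : V) : Prop := ∃ p : E → Γ, (∀ x ∉ G.edgesWithin A \ S, p x = 0) ∧
    G.netOutflow p = (Pi.single u γ - Pi.single v γ : V → Γ)
  have add_single : ∀ {u w : V} {x δ}, R u → x ∈ G.edgesWithin A \ S →
      G.netOutflow (Pi.single x δ) = (Pi.single w γ - Pi.single u γ : V → Γ) → R w := by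
    rintro u w x δ ⟨p, hp, hnet⟩ hx hδ
    refine ⟨p + Pi.single x δ, fun y hy => ?_, ?_⟩
    · rw [Pi.add_apply, hp y hy, Pi.single_eq_of_ne (by rintro rfl; exact hy hx), add_zero]
    · rw [map_add, hnet, hδ]
      abel
  suffices heq : A.filter R = A from (mem_filter.1 (heq.ge hu)).2
  by_contra hn
  have hvR : v ∈ A.filter R := mem_filter.2 ⟨hv, 0, fun _ _ => rfl, by simp⟩
  obtain ⟨x, hxS, hx⟩ := h.2 _ (filter_subset R A) ⟨v, hvR⟩ hn
  simp only [Links, mem_filter, mem_sdiff] at hx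
  have hxA : x ∈ G.edgesWithin A \ S := by
    rw [mem_sdiff, mem_edgesWithin]
    tauto
  rcases hx with ⟨hs, ht, hnt⟩ | ⟨⟨hs, hns⟩, ht⟩
  · refine hnt ⟨ht, add_single (δ := -γ) hs.2 hxA ?_⟩
    rw [Pi.single_neg, map_neg, netOutflow_single, neg_sub]
  · exact hns ⟨hs, add_single ht.2 hxA (netOutflow_single x γ)⟩

lemma ConnectedAvoiding.exists_flow_single (h : G.ConnectedAvoiding S A)
    (hx : x ∈ G.edgesWithin A) (hxS : x ∈ S) (γ : Γ) : ∃ φ : E → Γ, G.IsFlow φ ∧ φ x = γ ∧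
      ∀ y ∉ insert x (G.edgesWithin A \ S), φ y = 0 := by
  rw [mem_edgesWithin] at hx
  obtain ⟨p, hp, hnet⟩ := h.exists_netOutflow_eq hx.2 hx.1 γ
  refine ⟨p + Pi.single x γ, ?_, by simp [hp x (by simp [hxS])], fun y hy => ?_⟩
  · rw [isFlow_iff, map_add, hnet, netOutflow_single]
    abel
  · rw [mem_insert, not_or] at hy
    simp [hp y hy.2, hy.1]

lemma ConnectedAvoiding.exists_flow_extend (h : G.ConnectedAvoiding S A)
    (hT : T ⊆ G.edgesWithin A) (hTS : T ⊆ S) (g : E → Γ) : ∃ φ : E → Γ, G.IsFlow φ ∧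
      (∀ x ∈ T, φ x = g x) ∧ ∀ x ∉ T ∪ (G.edgesWithin A \ S), φ x = 0 := by
  have hex : ∀ x ∈ T, ∃ φ : E → Γ, G.IsFlow φ ∧ φ x = g x ∧
      ∀ y ∉ insert x (G.edgesWithin A \ S), φ y = 0 :=
    fun x hx => h.exists_flow_single (hT hx) (hTS hx) (g x)
  choose! χ hχ hχx hχ0 using hex
  refine ⟨∑ x ∈ T, χ x, IsFlow.sum T hχ, fun x hx => ?_, fun y hy => ?_⟩
  · rw [Finset.sum_apply, sum_eq_single_of_mem x hx, hχx x hx]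
    exact fun y hy hyx => hχ0 y hy x (by simp [hyx.symm, hTS hx])
  · rw [Finset.sum_apply]
    exact sum_eq_zero fun x hx => hχ0 x hx y (by grind)

lemma connectedAvoiding_edgesBetween_erase (hd : Disjoint X Y) (hX : G.ConnectedSet X)
    (hY : G.ConnectedSet Y) (h₀ : e₀ ∈ G.edgesBetween X Y) :
    G.ConnectedAvoiding ((G.edgesBetween X Y).erase e₀) (X ∪ Y) := by
  refine ConnectedAvoiding.union_of_links (hX.anti fun x hx hs ht => ?_)
    (hY.anti fun x hx hs ht => ?_) (notMem_erase e₀ _) (mem_edgesBetween.1 h₀)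
  all_goals have hl := mem_edgesBetween.1 (mem_of_mem_erase hx)
  · exact absurd (mem_edgesWithin.2 ⟨hs, ht⟩) (hl.notMem_edgesWithin hd)
  · exact absurd (mem_edgesWithin.2 ⟨hs, ht⟩) (hl.symm.notMem_edgesWithin hd.symm)

/-- A circuit of `X ∪ Y` through the edges `e₀` and `e₁`, but no other edge between `X` and `Y`. -/
lemma exists_flow_through_two_links (hd : Disjoint X Y) (hX : G.ConnectedSet X)
    (hY : G.ConnectedSet Y) (h₀ : e₀ ∈ G.edgesBetween X Y) (h₁ : e₁ ∈ G.edgesBetween X Y)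
    (hne : e₁ ≠ e₀) {γ : Γ} (hγ : γ ≠ 0) : ∃ χ : E → Γ, G.IsFlow χ ∧ χ e₁ = γ ∧ χ e₀ ≠ 0 ∧
      ∀ y ∉ insert e₁ (G.edgesWithin (X ∪ Y) \ (G.edgesBetween X Y).erase e₀), χ y = 0 := by
  obtain ⟨χ, hχ, hχ₁, hχ0⟩ := (connectedAvoiding_edgesBetween_erase hd hX hY h₀).exists_flow_single
    (edgesBetween_subset_edgesWithin h₁) (mem_erase.2 ⟨hne, h₁⟩) γ
  refine ⟨χ, hχ, hχ₁, fun h0 => hγ ?_, hχ0⟩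
  rw [← hχ₁]
  refine hχ.eq_zero_of_bridge (X := X) ?_ fun y hy hy0 => ?_
  · have := (mem_edgesBetween.1 h₁).src_mem_iff_not_tgt_mem hd
    tauto
  · have hye : y ≠ e₀ := by
      rintro rfl
      exact hy0 h0
    have hmem : y ∈ G.edgesWithin (X ∪ Y) \ (G.edgesBetween X Y).erase e₀ :=
      (mem_insert.1 (not_imp_comm.1 (hχ0 y) hy0)).resolve_left hy
    simp only [mem_sdiff, mem_edgesWithin, mem_union, mem_erase, mem_edgesBetween, Links] at hmem
    have hdX := fun v (hv : v ∈ X) => disjoint_left.1 hd hv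
    have := hdX (G.src y)
    have := hdX (G.tgt y)
    tauto

lemma exists_add_ne_add_mul_ne (a b a' b' k : ZMod 3) (hk : k ≠ 0) :
    ∃ c : ZMod 3, a + c ≠ b ∧ a' + c * k ≠ b' := by
  revert a b a' b' k
  decide

/-- All but two of the edges between `X` and `Y` may be given any values; a multiple of a circuit
through these two edges then takes care of them, as `ZMod 3` has three elements. -/
lemma exists_flow_between (hd : Disjoint X Y) (hX : G.ConnectedSet X) (hY : G.ConnectedSet Y)
    (h2 : 2 ≤ G.dartCount X Y) (f : E → ZMod 3) : ∃ ψ : E → ZMod 3, G.IsFlow ψ ∧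
      (∀ x ∉ G.edgesWithin (X ∪ Y), ψ x = 0) ∧ ∀ x ∈ G.edgesBetween X Y, ψ x ≠ f x := by
  rw [dartCount_eq_card_edgesBetween hd] at h2
  obtain ⟨e₀, h₀, e₁, h₁, hne⟩ := one_lt_card.1 h2
  have hsub : G.edgesBetween X Y ⊆ G.edgesWithin (X ∪ Y) := edgesBetween_subset_edgesWithin
  obtain ⟨φ, hφ, hφf, hφ0⟩ := (connectedAvoiding_edgesBetween_erase hd hX hY h₀).exists_flow_extend
    (T := ((G.edgesBetween X Y).erase e₀).erase e₁) (by grind) (erase_subset _ _) (fun x => f x + 1)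
  obtain ⟨χ, hχ, hχ₁, hχ₀, hχ0⟩ :=
    exists_flow_through_two_links hd hX hY h₀ h₁ hne.symm (one_ne_zero (α := ZMod 3))
  obtain ⟨c, hc₁, hc₀⟩ := exists_add_ne_add_mul_ne (φ e₁) (f e₁) (φ e₀) (f e₀) (χ e₀) hχ₀
  refine ⟨φ + c • χ, hφ.add (hχ.smul c), fun x hx => ?_, fun x hx => ?_⟩
  · simp [hφ0 x (by grind), hχ0 x (by grind)]
  · rcases eq_or_ne x e₁ with rfl | hx₁
    · simpa [hχ₁] using hc₁
    rcases eq_or_ne x e₀ with rfl | hx₀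
    · simpa using hc₀
    have hφx := hφf x (by grind)
    have hχx := hχ0 x (by grind)
    simp [hφx, hχx]

end FlowExtension

section FlowBase

variable {V E : Type} [Fintype E]

/-- Flows of the subgraph induced on `D`, with values in `ZMod 3`, can avoid any forbidden values
on the edges of this subgraph outside `S`. -/
def FlowAvoidable (G : Multigraph V E) (D : Finset V) (S : Finset E) : Prop :=
  ∀ f : E → ZMod 3, ∃ ψ : E → ZMod 3, G.IsFlow ψ ∧ (∀ x ∉ G.edgesWithin D, ψ x = 0) ∧
    ∀ x ∈ G.edgesWithin D, x ∉ S → ψ x ≠ f x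

/-- The paper's peripheral 2-bases `S` of the subgraph induced on `D`, by their two effects: the
flows over `ZMod 3` take care of the edges outside `S`, and every function on `S` extends to a flow
along the connected complement of `S`. -/
structure IsFlowBase (G : Multigraph V E) (D : Finset V) (S : Finset E) : Prop where
  subset : S ⊆ G.edgesWithin D
  connectedAvoiding : G.ConnectedAvoiding S D
  flowAvoidable : G.FlowAvoidable D S

/-- The version of `IsFlowBase` relative to a set `X`, disjoint from `H`, which is already dealt
with: the edges within `X` are exempt from avoiding forbidden values. -/
structure IsRelFlowBase (G : Multigraph V E) (X H : Finset V) (S : Finset E) : Prop where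
  subset : S ⊆ G.edgesWithin H
  connectedAvoiding : G.ConnectedAvoiding S H
  flowAvoidable : G.FlowAvoidable (X ∪ H) (G.edgesWithin X ∪ S)

variable {G : Multigraph V E} {A B D H X Y Y' : Finset V} {S S₁ S₂ S' : Finset E} {z : V} {x : E}

lemma disjoint_edgesWithin (h : Disjoint A B) :
    Disjoint (G.edgesWithin A) (G.edgesWithin B) := by
  simp only [disjoint_left, mem_edgesWithin] at h ⊢
  exact fun x hA hB => h hA.1 hB.1

lemma Links.notMem_union (h : G.Links x A B) (hd : Disjoint A B) (h₁ : S₁ ⊆ G.edgesWithin A)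
    (h₂ : S₂ ⊆ G.edgesWithin B) : x ∉ S₁ ∪ S₂ := by
  rw [mem_union, not_or]
  exact ⟨fun hx => h.notMem_edgesWithin hd (h₁ hx),
    fun hx => h.symm.notMem_edgesWithin hd.symm (h₂ hx)⟩

lemma ConnectedAvoiding.union_of_disjoint (h : G.ConnectedAvoiding S A) (hd : Disjoint A B)
    (hS' : S' ⊆ G.edgesWithin B) : G.ConnectedAvoiding (S ∪ S') A :=
  h.anti fun _ hx hs ht => (mem_union.1 hx).resolve_right fun hx =>
    disjoint_left.1 (disjoint_edgesWithin hd) (mem_edgesWithin.2 ⟨hs, ht⟩) (hS' hx)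

lemma flowAvoidable_union (hd : Disjoint X Y) (hX : G.ConnectedSet X) (hY : G.ConnectedSet Y)
    (h2 : 2 ≤ G.dartCount X Y) :
    G.FlowAvoidable (X ∪ Y) (G.edgesWithin X ∪ G.edgesWithin Y) := by
  intro f
  obtain ⟨ψ, hψ, hψ0, hψf⟩ := exists_flow_between hd hX hY h2 f
  refine ⟨ψ, hψ, hψ0, fun x hx hxS => hψf x ?_⟩
  simp only [mem_union, mem_edgesWithin, mem_edgesBetween, Links] at *
  tauto

lemma FlowAvoidable.trans (hYD : Y ⊆ D) (hY : G.FlowAvoidable Y S₁)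
    (hD : G.FlowAvoidable D (G.edgesWithin Y ∪ S₂)) : G.FlowAvoidable D (S₁ ∪ S₂) := by
  intro f
  obtain ⟨ψ, hψ, hψ0, hψf⟩ := hD f
  obtain ⟨χ, hχ, hχ0, hχf⟩ := hY (f - ψ)
  refine ⟨ψ + χ, hψ.add hχ, fun x hx => ?_, fun x hx hxS => ?_⟩
  · simp [hψ0 x hx, hχ0 x fun h => hx (edgesWithin_mono hYD h)]
  rw [mem_union, not_or] at hxS
  by_cases hxY : x ∈ G.edgesWithin Y
  · exact fun h => hχf x hxY hxS.1 (by simp [← h])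
  · simpa [hχ0 x hxY] using hψf x hx (by simp [hxS.2, hxY])

lemma FlowAvoidable.union (hS : G.FlowAvoidable Y S) (hd : Disjoint X Y) (hX : G.ConnectedSet X)
    (hY : G.ConnectedSet Y) (h2 : 2 ≤ G.dartCount X Y) :
    G.FlowAvoidable (X ∪ Y) (G.edgesWithin X ∪ S) := by
  rw [union_comm _ S]
  refine hS.trans subset_union_right ?_
  rw [union_comm (G.edgesWithin Y)]
  exact flowAvoidable_union hd hX hY h2

lemma ConnectedAvoiding.edgesWithin_union (hYD : Y ⊆ D) (hS : S ⊆ G.edgesWithin (D \ Y))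
    (hc : G.ConnectedAvoiding S (D \ Y)) (hn : ∀ y ∈ Y, 0 < G.dartCount {y} (D \ Y)) :
    G.ConnectedAvoiding (G.edgesWithin Y ∪ S) D := by
  rw [← sdiff_union_of_subset hYD, union_comm (G.edgesWithin Y)]
  refine (hc.union_of_disjoint sdiff_disjoint subset_rfl).union_of_forall_links fun y hy => ?_
  obtain ⟨x, hx⟩ := dartCount_pos.1 (hn y hy)
  have hx' : G.Links x Y (D \ Y) := hx.mono (by simpa using hy) subset_rfl
  exact ⟨x, hx'.symm.notMem_union sdiff_disjoint hS subset_rfl, hx⟩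

lemma IsRelFlowBase.trans (hYH : Y ⊆ H) (h₂ : G.IsRelFlowBase (X ∪ Y) (H \ Y) S₂)
    (hS₁ : S₁ ⊆ G.edgesWithin Y) (hc : G.ConnectedAvoiding (S₁ ∪ S₂) H)
    (h₁ : G.FlowAvoidable (X ∪ Y) (G.edgesWithin X ∪ S₁)) : G.IsRelFlowBase X H (S₁ ∪ S₂) where
  subset := union_subset (hS₁.trans (edgesWithin_mono hYH))
    (h₂.subset.trans (edgesWithin_mono sdiff_subset))
  connectedAvoiding := hc
  flowAvoidable := by
    have hU : X ∪ Y ∪ H \ Y = X ∪ H := by rw [union_assoc, union_sdiff_of_subset hYH]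
    rw [← union_assoc]
    exact h₁.trans (union_subset_union_right hYH) (hU ▸ h₂.flowAvoidable)

lemma IsRelFlowBase.edgesWithin_union (h : G.IsRelFlowBase (X ∪ Y) (H \ Y) S)
    (hXH : Disjoint X H) (hYH : Y ⊆ H) (hX : G.ConnectedSet X) (hY : G.ConnectedSet Y)
    (h2 : 2 ≤ G.dartCount X Y) (hn : ∀ y ∈ Y, 0 < G.dartCount {y} (H \ Y)) :
    G.IsRelFlowBase X H (G.edgesWithin Y ∪ S) :=
  h.trans hYH subset_rfl (h.connectedAvoiding.edgesWithin_union hYH h.subset hn)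
    (flowAvoidable_union (hXH.mono_right hYH) hX hY h2)

lemma IsFlowBase.isRelFlowBase (h : G.IsFlowBase H S) (hXH : Disjoint X H)
    (hX : G.ConnectedSet X) (h2 : 2 ≤ G.dartCount X H) : G.IsRelFlowBase X H S :=
  ⟨h.subset, h.connectedAvoiding,
    h.flowAvoidable.union hXH hX h.connectedAvoiding.connectedSet h2⟩

lemma IsFlowBase.union (h₁ : G.IsFlowBase D S₁) (h₂ : G.IsRelFlowBase (X ∪ D) (H \ D) S₂)
    (hXH : Disjoint X H) (hDH : D ⊆ H) (hX : G.ConnectedSet X) (h2 : 2 ≤ G.dartCount X D)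
    (hn : 0 < G.dartCount D (H \ D)) : G.IsRelFlowBase X H (S₁ ∪ S₂) := by
  refine h₂.trans hDH h₁.subset ?_
    (h₁.isRelFlowBase (hXH.mono_right hDH) hX h2).flowAvoidable
  obtain ⟨x, hx⟩ := dartCount_pos.1 hn
  have hc₁ := h₁.connectedAvoiding.union_of_disjoint disjoint_sdiff h₂.subset
  have hc₂ := h₂.connectedAvoiding.union_of_disjoint sdiff_disjoint h₁.subset
  rw [union_comm S₂] at hc₂
  rw [← union_sdiff_of_subset hDH]
  exact hc₁.union_of_links hc₂ (hx.notMem_union disjoint_sdiff h₁.subset h₂.subset) hx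

lemma IsRelFlowBase.isFlowBase (h : G.IsRelFlowBase Y (D \ Y) S) (hYD : Y ⊆ D)
    (hn : ∀ y ∈ Y, 0 < G.dartCount {y} (D \ Y)) : G.IsFlowBase D (G.edgesWithin Y ∪ S) :=
  ⟨union_subset (edgesWithin_mono hYD) (h.subset.trans (edgesWithin_mono sdiff_subset)),
    h.connectedAvoiding.edgesWithin_union hYD h.subset hn,
    union_sdiff_of_subset hYD ▸ h.flowAvoidable⟩

lemma ConnectedSet.subset_of_edgesWithin_union_eq (hY : G.ConnectedSet Y) (hz : z ∈ Y)
    (hz' : z ∈ Y') (hS' : S' ⊆ G.edgesWithin (H \ Y'))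
    (h : G.edgesWithin Y ∪ S = G.edgesWithin Y' ∪ S') : Y ⊆ Y' := by
  by_contra hn
  obtain ⟨x, -, hx⟩ := hY.2 (Y ∩ Y') inter_subset_left ⟨z, by simp [hz, hz']⟩
    fun h => hn (inter_eq_left.1 h)
  simp only [Links, mem_inter, mem_sdiff] at hx
  have hxY : x ∈ G.edgesWithin Y' ∪ S' :=
    h ▸ mem_union_left _ (mem_edgesWithin.2 (by tauto))
  rcases mem_union.1 hxY with hx' | hx'
  · rw [mem_edgesWithin] at hx'
    tauto
  · have := mem_edgesWithin.1 (hS' hx')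
    simp only [mem_sdiff] at this
    tauto

lemma injOn_edgesWithin_union {F : Finset (Finset E)} (h : ∀ S ∈ F, S ⊆ G.edgesWithin (H \ Y)) :
    Set.InjOn (G.edgesWithin Y ∪ ·) (F : Set (Finset E)) := by
  have hd (S) (hS : S ∈ F) : Disjoint (G.edgesWithin Y) S :=
    (disjoint_edgesWithin disjoint_sdiff).mono_right (h S hS)
  intro S hS S' hS' (heq : G.edgesWithin Y ∪ S = G.edgesWithin Y ∪ S')
  rw [← union_sdiff_cancel_left (hd S hS), heq, union_sdiff_cancel_left (hd S' hS')]

lemma card_add_card_le {F F' T : Finset (Finset E)} (hY : G.ConnectedSet Y)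
    (hY' : G.ConnectedSet Y') (hz : z ∈ Y) (hz' : z ∈ Y') (hne : Y ≠ Y')
    (hF : ∀ S ∈ F, S ⊆ G.edgesWithin (H \ Y)) (hF' : ∀ S ∈ F', S ⊆ G.edgesWithin (H \ Y'))
    (hT : ∀ S ∈ F, G.edgesWithin Y ∪ S ∈ T) (hT' : ∀ S ∈ F', G.edgesWithin Y' ∪ S ∈ T) :
    F.card + F'.card ≤ T.card := by
  rw [← card_image_of_injOn (injOn_edgesWithin_union hF),
    ← card_image_of_injOn (injOn_edgesWithin_union hF'), ← card_union_of_disjoint]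
  · exact card_le_card (union_subset (image_subset_iff.2 hT) (image_subset_iff.2 hT'))
  · rw [disjoint_left]
    simp only [mem_image, not_exists, not_and]
    rintro _ ⟨S, hS, rfl⟩ S' hS' heq
    exact hne (subset_antisymm (hY.subset_of_edgesWithin_union_eq hz hz' (hF' S' hS') heq.symm)
      (hY'.subset_of_edgesWithin_union_eq hz' hz (hF S hS) heq))

end FlowBase

/-! ### Ear decompositions -/

section Decomposition

variable {V E : Type} [Fintype E]

/-- All edge sets `S` with `IsFlowBase D S`. -/
noncomputable def flowBases (G : Multigraph V E) (D : Finset V) : Finset (Finset E) :=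
  univ.filter (G.IsFlowBase D)

/-- All edge sets `S` with `IsRelFlowBase X H S`. -/
noncomputable def relFlowBases (G : Multigraph V E) (X H : Finset V) : Finset (Finset E) :=
  univ.filter (G.IsRelFlowBase X H)

@[simp] lemma mem_flowBases {G : Multigraph V E} {D : Finset V} {S : Finset E} :
    S ∈ G.flowBases D ↔ G.IsFlowBase D S := by
  simp [flowBases]

@[simp] lemma mem_relFlowBases {G : Multigraph V E} {X H : Finset V} {S : Finset E} :
    S ∈ G.relFlowBases X H ↔ G.IsRelFlowBase X H S := by
  simp [relFlowBases]

variable [Fintype V]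

/-- All ears have at most `M + 1` vertices, as long as their host has a connected complement. -/
def EarsBoundedBy (G : Multigraph V E) (M : ℕ) : Prop :=
  ∀ D Y : Finset V, G.IsEar D Y → G.ConnectedSet Dᶜ → Y.card ≤ M + 1

/-- The number of flow bases of `D` is at least exponential in `(D.card - 1) / (2 * M)`. -/
def HasManyFlowBases (G : Multigraph V E) (M : ℕ) (D : Finset V) : Prop :=
  ∃ q, 2 ^ q ≤ (G.flowBases D).card ∧ D.card ≤ 2 * M * q + 1

/-- The relative version of `HasManyFlowBases`. The term `dartCount H Hᶜ` makes this an
induction invariant: moving an ear `Y` from `H` to `X` removes `Y.card` vertices from `H` and adds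
at most `Y.card - 2` to that term, which is `2 * M` in total. -/
def HasManyRelFlowBases (G : Multigraph V E) (M : ℕ) (X H : Finset V) : Prop :=
  ∃ q, 2 ^ q ≤ (G.relFlowBases X H).card ∧ H.card + 2 ≤ 2 * M * q + G.dartCount H Hᶜ

/-- The edges leaving `D` form a bond of size three. -/
structure IsThreeBond (G : Multigraph V E) (D : Finset V) : Prop where
  dartCount_eq : G.dartCount D Dᶜ = 3
  connected : G.ConnectedSet D
  connected_compl : G.ConnectedSet Dᶜ

/-- A state of the ear decomposition: `X` has been dealt with, `H` remains, and exactly one edge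
joins `H` to the vertices outside of the two. -/
structure IsPartialDecomposition (G : Multigraph V E) (X H : Finset V) : Prop where
  disjoint : Disjoint X H
  connected_left : G.ConnectedSet X
  connected_right : G.ConnectedSet H
  connected_compl : G.ConnectedSet Hᶜ
  dartCount_eq : G.dartCount H (H ∪ X)ᶜ = 1

/-- `D` is a leaf, with root `d`, of the tree of 2-edge-connected blocks of `H` after deleting `X`:
a single edge leaves `D`, and it starts at `d`. -/
structure IsLeafBlock (G : Multigraph V E) (X H D : Finset V) (d : V) : Prop where
  subset : D ⊆ H
  mem : d ∈ D
  connected : G.ConnectedSet D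
  dartCount_eq : G.dartCount D (D ∪ X)ᶜ = 1
  dartCount_root : G.dartCount {d} (D ∪ X)ᶜ = 1
  bridgeless : ∀ K ⊆ D.erase d, G.dartCount K (D \ K) ≠ 1

variable {G : Multigraph V E} {M : ℕ} {D H X Y : Finset V}

lemma exists_two_pow_succ_le {m n k q₁ q₂ : ℕ} (h₁ : 2 ^ q₁ ≤ m) (h₂ : 2 ^ q₂ ≤ n)
    (h : m + n ≤ k) : ∃ q, 2 ^ (q + 1) ≤ k ∧ (q = q₁ ∨ q = q₂) := by
  have hmin : 2 ^ (min q₁ q₂ + 1) ≤ k := by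
    have := Nat.pow_le_pow_right two_pos (min_le_left q₁ q₂)
    have := Nat.pow_le_pow_right two_pos (min_le_right q₁ q₂)
    rw [pow_succ]
    omega
  exact ⟨_, hmin, min_choice q₁ q₂⟩

lemma dartCount_compl_eq (h : Disjoint X D) (K : Finset V) :
    G.dartCount K Dᶜ = G.dartCount K X + G.dartCount K (D ∪ X)ᶜ := by
  rw [← dartCount_sdiff_add_compl K (subset_union_left (s₁ := D) (s₂ := X)),
    union_sdiff_cancel_left h.symm]

lemma dartCount_compl_union_eq (hD : D ⊆ H) (h : Disjoint X H) (K : Finset V) :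
    G.dartCount K (D ∪ X)ᶜ = G.dartCount K (H \ D) + G.dartCount K (H ∪ X)ᶜ := by
  rw [← dartCount_sdiff_add_compl K (union_subset_union_left hD),
    show (H ∪ X) \ (D ∪ X) = H \ D by grind [Finset.disjoint_left]]

lemma dartCount_sdiff_compl (hYD : Y ⊆ D) :
    G.dartCount (D \ Y) (D \ Y)ᶜ + G.dartCount Y Dᶜ =
      G.dartCount D Dᶜ + G.dartCount Y (D \ Y) := by
  rw [show (D \ Y)ᶜ = Y ∪ Dᶜ by grind [Finset.mem_compl],
    dartCount_union_right (disjoint_compl_right.mono_left hYD), ← dartCount_add_sdiff hYD Dᶜ,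
    dartCount_comm (D \ Y) Y]
  omega

lemma ConnectedSet.compl_sdiff (hY : G.ConnectedSet Y) (hD : G.ConnectedSet Dᶜ)
    (h : 0 < G.dartCount Y Dᶜ) : G.ConnectedSet (D \ Y)ᶜ := by
  rw [show (D \ Y)ᶜ = Y ∪ Dᶜ by grind [Finset.mem_compl]]
  exact hY.union_of_dartCount_pos hD h

/-- A tree on `Y` has `Y.card - 1` edges, so `Y.card + 2` edges leave `Y` at most. -/
lemma IsEar.dartCount_sdiff_le_and_dartCount_compl_eq (hG : G.CubicThreeEdgeConnected)
    (h : G.IsEar D Y) : G.dartCount Y (D \ Y) ≤ Y.card ∧ G.dartCount Y Dᶜ = 2 := by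
  have htree := h.connected.two_mul_card_le
  have hattached := card_le_dartCount h.attached
  have hcubic := hG.dartCount_univ Y
  rw [dartCount_univ_eq Y h.subset] at hcubic
  have := h.two_le_out
  omega

end Decomposition

section ThreeBond

variable {V E : Type} [Fintype V] [Fintype E] {G : Multigraph V E} {M : ℕ} {D Y K : Finset V}
  {a b c v : V}

lemma IsThreeBond.ne_univ (hD : G.IsThreeBond D) (hK : K ⊆ D) : K ≠ univ := by
  rintro rfl
  obtain ⟨u, hu⟩ := hD.connected_compl.1
  exact mem_compl.1 hu (hK (mem_univ u))

lemma IsThreeBond.isPartialDecomposition (hD : G.IsThreeBond D)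
    (hG : G.CubicThreeEdgeConnected) (hY : G.IsEar D Y) :
    G.IsPartialDecomposition Y (D \ Y) where
  disjoint := disjoint_sdiff
  connected_left := hY.connected
  connected_right := hY.connected_sdiff
  connected_compl := hY.connected.compl_sdiff hD.connected_compl (by have := hY.two_le_out; omega)
  dartCount_eq := by
    rw [sdiff_union_of_subset hY.subset]
    have := dartCount_add_sdiff (G := G) hY.subset Dᶜ
    have := hD.dartCount_eq
    have := (hY.dartCount_sdiff_le_and_dartCount_compl_eq hG).2
    omega

lemma IsThreeBond.exists_two_pow_le_of_isEar (hD : G.IsThreeBond D)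
    (hG : G.CubicThreeEdgeConnected) (hM : G.EarsBoundedBy M) (hY : G.IsEar D Y)
    (ih : ∀ X H, H.card < D.card → G.IsPartialDecomposition X H → G.HasManyRelFlowBases M X H) :
    ∃ q, 2 ^ q ≤ (G.relFlowBases Y (D \ Y)).card ∧ D.card ≤ 2 * M * (q + 1) + 1 := by
  have hlong := hM D Y hY hD.connected_compl
  have hcard := card_sdiff_add_card_eq_card hY.subset
  have hpos := hY.connected.1.card_pos
  obtain ⟨q, hq, hle⟩ := ih Y (D \ Y) (by omega) (hD.isPartialDecomposition hG hY)
  have := dartCount_sdiff_compl (G := G) hY.subset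
  have := hY.dartCount_sdiff_le_and_dartCount_compl_eq hG
  have := hD.dartCount_eq
  exact ⟨q, hq, by rw [mul_add]; omega⟩

lemma CubicThreeEdgeConnected.edgesWithin_singleton (hG : G.CubicThreeEdgeConnected) (v : V) :
    G.edgesWithin {v} = ∅ := by
  have := Multigraph.dartCount_self (G := G) {v}
  rw [hG.dartCount_self] at this
  rw [← card_eq_zero]
  omega

lemma hasManyFlowBases_singleton (hG : G.CubicThreeEdgeConnected) (v : V) :
    G.HasManyFlowBases M {v} := by
  refine ⟨0, card_pos.2 ⟨∅, mem_flowBases.2 ⟨empty_subset _, ConnectedAvoiding.singleton _ _, ?_⟩⟩,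
    by simp⟩
  exact fun f => ⟨0, isFlow_zero, fun _ _ => rfl, by simp [hG.edgesWithin_singleton]⟩

lemma IsThreeBond.dartCount_singleton_compl_le_one (hD : G.IsThreeBond D)
    (hG : G.CubicThreeEdgeConnected) (hv : v ∈ D) (hne : (D.erase v).Nonempty) :
    G.dartCount {v} Dᶜ ≤ 1 := by
  refine hG.dartCount_compl_le_one hD.connected hv hne fun h1 => ?_
  have hcut := hG.three_le_cut (D.erase v) hne (hD.ne_univ (erase_subset _ _))
  have hsv : {v} ⊆ D := singleton_subset_iff.2 hv
  rw [← sdiff_singleton_eq_erase] at hcut h1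
  have := dartCount_sdiff_compl (G := G) hsv
  have := dartCount_univ_eq (G := G) {v} hsv
  have := hG.cubic v
  have := hG.dartCount_self v
  have := hD.dartCount_eq
  omega

lemma IsThreeBond.dartCount_sdiff_ne_one (hD : G.IsThreeBond D) (hG : G.CubicThreeEdgeConnected)
    (hc : c ∈ D) (hK : K ⊆ D.erase c) : G.dartCount K (D \ K) ≠ 1 := by
  intro h1
  have hKD := hK.trans (erase_subset _ _)
  have hKne : K.Nonempty := nonempty_iff_ne_empty.2 (by rintro rfl; simp at h1)
  have hcK : c ∈ D \ K := mem_sdiff.2 ⟨hc, fun h => notMem_erase c D (hK h)⟩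
  have := hG.three_le_dartCount_add hKD hKne (hD.ne_univ hKD)
  have := hG.three_le_cut (D \ K) ⟨c, hcK⟩ (hD.ne_univ sdiff_subset)
  have := dartCount_sdiff_compl (G := G) hKD
  have := hD.dartCount_eq
  omega

lemma IsThreeBond.exists_isEar_erase (hD : G.IsThreeBond D) (hG : G.CubicThreeEdgeConnected)
    (ha : a ∈ G.attachedTo D Dᶜ) (hb : b ∈ G.attachedTo D Dᶜ) (hc : c ∈ G.attachedTo D Dᶜ)
    (hab : a ≠ b) (hac : a ≠ c) (hbc : b ≠ c) : ∃ Y ⊆ D.erase c, G.IsEar D Y ∧ a ∈ Y ∧ b ∈ Y := by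
  rw [mem_attachedTo] at ha hb hc
  have haE : a ∈ D.erase c := mem_erase.2 ⟨hac, ha.1⟩
  have hpart := isPart_erase_of_bridgeless hG hD.connected hc.1
    (fun K hK => hD.dartCount_sdiff_ne_one hG hc.1 hK) ⟨a, haE⟩
  refine exists_isEar_of_dartCount_le_two hG hD.connected hpart (mem_attachedTo.2 ⟨haE, ha.2⟩)
    (mem_attachedTo.2 ⟨mem_erase.2 ⟨hbc, hb.1⟩, hb.2⟩) hab ?_
  have := dartCount_add_sdiff (G := G) (singleton_subset_iff.2 hc.1) Dᶜ
  rw [sdiff_singleton_eq_erase] at this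
  have := hD.dartCount_eq
  omega

lemma IsThreeBond.exists_two_isEar (hD : G.IsThreeBond D) (hG : G.CubicThreeEdgeConnected)
    (h1 : 1 < D.card) : ∃ Y Y', G.IsEar D Y ∧ G.IsEar D Y' ∧ Y ≠ Y' ∧ ∃ z, z ∈ Y ∧ z ∈ Y' := by
  have hcard : (G.attachedTo D Dᶜ).card = 3 := by
    rw [← dartCount_eq_card_attachedTo, hD.dartCount_eq]
    refine fun v hv => hD.dartCount_singleton_compl_le_one hG hv ?_
    rw [← card_pos, card_erase_of_mem hv]
    omega
  obtain ⟨a, ha, b, hb, c, hc, hab, hac, hbc⟩ :=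
    two_lt_card.1 (hcard ▸ lt_add_one 2 : 2 < (G.attachedTo D Dᶜ).card)
  obtain ⟨Y, -, hY, haY, hbY⟩ := hD.exists_isEar_erase hG ha hb hc hab hac hbc
  obtain ⟨Y', hYa, hY', hbY', -⟩ := hD.exists_isEar_erase hG hb hc ha hbc hab.symm hac.symm
  refine ⟨Y, Y', hY, hY', ?_, b, hbY, hbY'⟩
  rintro rfl
  exact notMem_erase a D (hYa haY)

lemma IsThreeBond.hasManyFlowBases (hD : G.IsThreeBond D) (hG : G.CubicThreeEdgeConnected)
    (hM : G.EarsBoundedBy M)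
    (ih : ∀ X H, H.card < D.card → G.IsPartialDecomposition X H → G.HasManyRelFlowBases M X H) :
    G.HasManyFlowBases M D := by
  rcases (Nat.succ_le_of_lt hD.connected.1.card_pos).eq_or_lt with h1 | h1
  · obtain ⟨v, rfl⟩ := card_eq_one.1 h1.symm
    exact hasManyFlowBases_singleton hG v
  obtain ⟨Y, Y', hY, hY', hne, z, hz, hz'⟩ := hD.exists_two_isEar hG h1
  obtain ⟨q₁, hq₁, hle₁⟩ := hD.exists_two_pow_le_of_isEar hG hM hY ih
  obtain ⟨q₂, hq₂, hle₂⟩ := hD.exists_two_pow_le_of_isEar hG hM hY' ih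
  have hflow {Y} (hY : G.IsEar D Y) :
      ∀ S ∈ G.relFlowBases Y (D \ Y), G.edgesWithin Y ∪ S ∈ G.flowBases D :=
    fun S hS => mem_flowBases.2 ((mem_relFlowBases.1 hS).isFlowBase hY.subset hY.attached)
  obtain ⟨q, hq, hq'⟩ := exists_two_pow_succ_le hq₁ hq₂
    (card_add_card_le hY.connected hY'.connected hz hz' hne
      (fun S hS => (mem_relFlowBases.1 hS).subset) (fun S hS => (mem_relFlowBases.1 hS).subset)
      (hflow hY) (hflow hY'))
  exact ⟨q + 1, hq, by rcases hq' with rfl | rfl <;> assumption⟩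

end ThreeBond

section LeafBlock

variable {V E : Type} [Fintype E] {G : Multigraph V E} {C D H X Y : Finset V} {d : V}

lemma ConnectedSet.sdiff_of_dartCount_le_one (hH : G.ConnectedSet H) (hD : D ⊆ H)
    (h1 : G.dartCount D (H \ D) ≤ 1) (hne : (H \ D).Nonempty) (hDne : D.Nonempty) :
    G.ConnectedSet (H \ D) := by
  refine connectedSet_iff.2 ⟨hne, fun B hB hBne hBD => Nat.pos_of_ne_zero fun h0 => ?_⟩
  have hpos : ∀ B ⊆ H \ D, B.Nonempty → G.dartCount B ((H \ D) \ B) = 0 →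
      0 < G.dartCount B D := by
    intro B hB hBne h0
    obtain ⟨z, hz⟩ := hDne
    have hout := hH.dartCount_pos (hB.trans sdiff_subset) hBne
      (by rintro rfl; exact (mem_sdiff.1 (hB (hD hz))).2 hz)
    rw [show H \ B = ((H \ D) \ B) ∪ D by grind,
      dartCount_union_right (by grind [Finset.disjoint_left])] at hout
    omega
  have hB_pos := hpos B hB hBne h0
  have hrest_pos := hpos ((H \ D) \ B) sdiff_subset
    (sdiff_nonempty.2 fun h => hBD (subset_antisymm hB h))
    (by rw [Finset.sdiff_sdiff_eq_self hB, dartCount_comm, h0])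
  have := dartCount_add_sdiff (G := G) hB D
  rw [dartCount_comm] at h1
  omega

lemma dartCount_eq_zero_of_subset_erase (hd : d ∈ D) (hK : Y ⊆ D.erase d)
    (h : G.dartCount D C = G.dartCount {d} C) : G.dartCount Y C = 0 := by
  have hle := dartCount_mono (G := G) hK (subset_refl C)
  have hsplit := dartCount_add_sdiff (G := G) (singleton_subset_iff.2 hd) C
  rw [sdiff_singleton_eq_erase] at hsplit
  omega

lemma card_mul_card_le_card_relFlowBases (hXH : Disjoint X H) (hX : G.ConnectedSet X)
    (hD : D ⊆ H) (h2 : 2 ≤ G.dartCount X D) (hpos : 0 < G.dartCount D (H \ D)) :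
    (G.flowBases D).card * (G.relFlowBases (X ∪ D) (H \ D)).card ≤ (G.relFlowBases X H).card := by
  rw [← card_product]
  refine card_le_card_of_injOn (fun p => p.1 ∪ p.2) ?_ ?_
  · simp only [Set.MapsTo, mem_coe, mem_product, mem_flowBases, mem_relFlowBases]
    exact fun p hp => hp.1.union hp.2 hXH hD hX h2 hpos
  · simp only [Set.InjOn, mem_coe, mem_product, mem_flowBases, mem_relFlowBases]
    intro p hp p' hp' h
    have hdisj : Disjoint (G.edgesWithin D) (G.edgesWithin (H \ D)) :=
      disjoint_edgesWithin disjoint_sdiff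
    have := hp.1.subset
    have := hp.2.subset
    have := hp'.1.subset
    have := hp'.2.subset
    refine Prod.ext ?_ ?_ <;> ext x <;> have := Finset.ext_iff.1 h x <;>
      grind [Finset.disjoint_left]

variable [Fintype V]

lemma connectedSet_of_minimal (hd : Disjoint X D) (hne : D.Nonempty)
    (h1 : G.dartCount D (D ∪ X)ᶜ = 1)
    (hmin : ∀ K ⊆ D, K.Nonempty → K ≠ D → G.dartCount K (K ∪ X)ᶜ ≠ 1) : G.ConnectedSet D := by
  refine connectedSet_iff.2 ⟨hne, fun B hB hBne hBD => Nat.pos_of_ne_zero fun h0 => ?_⟩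
  have hB' := hmin B hB hBne hBD
  have hrest := hmin (D \ B) sdiff_subset
    (sdiff_nonempty.2 fun h => hBD (subset_antisymm hB h)) (by grind)
  rw [dartCount_compl_union_eq hB hd] at hB'
  rw [dartCount_compl_union_eq sdiff_subset hd, Finset.sdiff_sdiff_eq_self hB,
    dartCount_comm (D \ B) B] at hrest
  have := dartCount_add_sdiff (G := G) hB (D ∪ X)ᶜ
  omega

lemma exists_isLeafBlock (hd : Disjoint X H) (hne : H.Nonempty)
    (h1 : G.dartCount H (H ∪ X)ᶜ = 1) : ∃ D d, G.IsLeafBlock X H D d := by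
  obtain ⟨D, hD, hleast⟩ := exists_min_image
    (univ.filter fun D : Finset V => D ⊆ H ∧ D.Nonempty ∧ G.dartCount D (D ∪ X)ᶜ = 1)
    card ⟨H, mem_filter.2 ⟨mem_univ _, subset_rfl, hne, h1⟩⟩
  simp only [mem_filter, mem_univ, true_and] at hD hleast
  obtain ⟨hDH, hDne, hD1⟩ := hD
  have hXD : Disjoint X D := hd.mono_right hDH
  have hmin : ∀ K ⊆ D, K.Nonempty → K ≠ D → G.dartCount K (K ∪ X)ᶜ ≠ 1 := fun K hK hKne hKD h =>
    hKD (eq_of_subset_of_card_le hK (hleast K ⟨hK.trans hDH, hKne, h⟩))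
  obtain ⟨d, hdD, hpos⟩ := exists_dartCount_pos (show 0 < G.dartCount D (D ∪ X)ᶜ by omega)
  have hle := dartCount_mono (G := G) (singleton_subset_iff.2 hdD) (subset_refl (D ∪ X)ᶜ)
  refine ⟨D, d, hDH, hdD, connectedSet_of_minimal hXD hDne hD1 hmin, hD1, by omega, ?_⟩
  intro K hK h
  have hKD := hK.trans (erase_subset _ _)
  have hKne : K.Nonempty := nonempty_iff_ne_empty.2 (by rintro rfl; simp at h)
  refine hmin K hKD hKne (fun hKeq => notMem_erase d D (hK (hKeq ▸ hdD))) ?_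
  rw [dartCount_compl_union_eq hKD hXD, h, dartCount_eq_zero_of_subset_erase hdD hK (by omega)]

lemma IsLeafBlock.dartCount_eq_zero (hD : G.IsLeafBlock X H D d) (hY : Y ⊆ D.erase d) :
    G.dartCount Y (D ∪ X)ᶜ = 0 :=
  dartCount_eq_zero_of_subset_erase hD.mem hY (by rw [hD.dartCount_eq, hD.dartCount_root])

end LeafBlock

section PartialDecomposition

variable {V E : Type} [Fintype V] [Fintype E] {G : Multigraph V E} {M : ℕ} {D H X Y Y' : Finset V}
  {d : V}

lemma IsPartialDecomposition.sdiff (hs : G.IsPartialDecomposition X H) (hYH : Y ⊆ H)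
    (hY : G.ConnectedSet Y) (hrest : G.ConnectedSet (H \ Y)) (hXY : 0 < G.dartCount X Y)
    (h0 : G.dartCount Y (H ∪ X)ᶜ = 0) : G.IsPartialDecomposition (X ∪ Y) (H \ Y) where
  disjoint := disjoint_union_left.2 ⟨hs.disjoint.mono_right sdiff_subset, disjoint_sdiff⟩
  connected_left := hs.connected_left.union_of_dartCount_pos hY hXY
  connected_right := hrest
  connected_compl := by
    refine hY.compl_sdiff hs.connected_compl ?_
    rw [dartCount_compl_eq hs.disjoint, dartCount_comm Y X]
    omega
  dartCount_eq := by
    rw [show H \ Y ∪ (X ∪ Y) = H ∪ X by grind]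
    have := dartCount_add_sdiff (G := G) hYH (H ∪ X)ᶜ
    have := hs.dartCount_eq
    omega

lemma IsLeafBlock.dartCount_sdiff_le_one (hD : G.IsLeafBlock X H D d) (hXH : Disjoint X H) :
    G.dartCount D (H \ D) ≤ 1 := by
  have := dartCount_compl_union_eq (G := G) hD.subset hXH D
  have := hD.dartCount_eq
  omega

lemma IsLeafBlock.connectedSet_sdiff (hD : G.IsLeafBlock X H D d)
    (hs : G.IsPartialDecomposition X H) (hne : D ≠ H) : G.ConnectedSet (H \ D) :=
  hs.connected_right.sdiff_of_dartCount_le_one hD.subset (hD.dartCount_sdiff_le_one hs.disjoint)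
    (sdiff_nonempty.2 fun h => hne (subset_antisymm hD.subset h)) ⟨d, hD.mem⟩

lemma IsLeafBlock.dartCount_sdiff_pos (hD : G.IsLeafBlock X H D d)
    (hs : G.IsPartialDecomposition X H) (hne : D ≠ H) : 0 < G.dartCount D (H \ D) :=
  hs.connected_right.dartCount_pos hD.subset ⟨d, hD.mem⟩ hne

lemma IsLeafBlock.isThreeBond (hD : G.IsLeafBlock X H D d) (hs : G.IsPartialDecomposition X H)
    (h3 : G.dartCount D Dᶜ = 3) : G.IsThreeBond D where
  dartCount_eq := h3
  connected := hD.connected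
  connected_compl := by
    rcases eq_or_ne D H with rfl | hne
    · exact hs.connected_compl
    have hone := hD.dartCount_eq
    refine Finset.sdiff_sdiff_eq_self hD.subset ▸
      (hD.connectedSet_sdiff hs hne).compl_sdiff hs.connected_compl ?_
    have := dartCount_add_sdiff (G := G) hD.subset (H ∪ X)ᶜ
    have := dartCount_compl_union_eq (G := G) hD.subset hs.disjoint D
    have := hD.dartCount_sdiff_pos hs hne
    have := hs.dartCount_eq
    rw [dartCount_compl_eq hs.disjoint]
    omega

lemma IsLeafBlock.dartCount_left (hD : G.IsLeafBlock X H D d) (hXH : Disjoint X H)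
    (h3 : G.dartCount D Dᶜ = 3) : G.dartCount X D = 2 := by
  have := dartCount_compl_eq (G := G) (hXH.mono_right hD.subset) D
  have := hD.dartCount_eq
  rw [dartCount_comm]
  omega

lemma IsLeafBlock.isPartialDecomposition_sdiff (hD : G.IsLeafBlock X H D d)
    (hs : G.IsPartialDecomposition X H) (h3 : G.dartCount D Dᶜ = 3) (hne : D ≠ H) :
    G.IsPartialDecomposition (X ∪ D) (H \ D) := by
  refine hs.sdiff hD.subset hD.connected (hD.connectedSet_sdiff hs hne)
    (by rw [hD.dartCount_left hs.disjoint h3]; exact two_pos) ?_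
  have := dartCount_compl_union_eq (G := G) hD.subset hs.disjoint D
  have := hD.dartCount_sdiff_pos hs hne
  have := hD.dartCount_eq
  omega

lemma IsLeafBlock.hasManyRelFlowBases (hD : G.IsLeafBlock X H D d)
    (hs : G.IsPartialDecomposition X H) (h3 : G.dartCount D Dᶜ = 3)
    (ihD : G.HasManyFlowBases M D)
    (ihH : ∀ X' H', H'.card < H.card → G.IsPartialDecomposition X' H' →
      G.HasManyRelFlowBases M X' H') :
    G.HasManyRelFlowBases M X H := by
  obtain ⟨q₁, hq₁, hle₁⟩ := ihD
  have hXD := (hD.dartCount_left hs.disjoint h3).ge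
  rcases eq_or_ne D H with rfl | hne
  · refine ⟨q₁, hq₁.trans (card_le_card fun S hS => ?_), by omega⟩
    exact mem_relFlowBases.2
      ((mem_flowBases.1 hS).isRelFlowBase hs.disjoint hs.connected_left hXD)
  have hpos := hD.dartCount_sdiff_pos hs hne
  have hcard := card_sdiff_add_card_eq_card hD.subset
  have hDpos := hD.connected.1.card_pos
  obtain ⟨q₂, hq₂, hle₂⟩ := ihH _ (H \ D) (by omega) (hD.isPartialDecomposition_sdiff hs h3 hne)
  refine ⟨q₁ + q₂, ?_, ?_⟩
  · rw [pow_add]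
    exact (Nat.mul_le_mul hq₁ hq₂).trans
      (card_mul_card_le_card_relFlowBases hs.disjoint hs.connected_left hD.subset hXD hpos)
  · have := dartCount_sdiff_compl (G := G) hD.subset
    have := hD.dartCount_sdiff_le_one hs.disjoint
    have := dartCount_compl_eq (G := G) hs.disjoint D
    have := dartCount_comm (G := G) X D
    rw [mul_add]
    omega

lemma IsLeafBlock.connectedSet_sdiff_of_isEar (hD : G.IsLeafBlock X H D d)
    (hs : G.IsPartialDecomposition X H) (hYd : Y ⊆ D.erase d) (hY : G.IsEar D Y) :
    G.ConnectedSet (H \ Y) := by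
  rcases eq_or_ne D H with rfl | hne
  · exact hY.connected_sdiff
  rw [show H \ Y = (D \ Y) ∪ (H \ D) by grind [hD.subset, hY.subset]]
  refine hY.connected_sdiff.union_of_dartCount_pos (hD.connectedSet_sdiff hs hne) ?_
  have := dartCount_compl_union_eq (G := G) hD.subset hs.disjoint Y
  have := hD.dartCount_eq_zero hYd
  have := dartCount_add_sdiff (G := G) hY.subset (H \ D)
  have := hD.dartCount_sdiff_pos hs hne
  omega

lemma IsLeafBlock.isEar (hD : G.IsLeafBlock X H D d) (hs : G.IsPartialDecomposition X H)
    (hYd : Y ⊆ D.erase d) (hY : G.IsEar D Y) : G.IsEar H Y ∧ 2 ≤ G.dartCount X Y := by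
  have hDX := dartCount_compl_eq (G := G) (hs.disjoint.mono_right hD.subset) Y
  have hHX := dartCount_compl_eq (G := G) hs.disjoint Y
  have h0 := hD.dartCount_eq_zero hYd
  have hout := hY.two_le_out
  refine ⟨⟨⟨hY.subset.trans hD.subset, hY.connected, hD.connectedSet_sdiff_of_isEar hs hYd hY⟩,
    fun y hy => (hY.attached y hy).trans_le
      (dartCount_mono subset_rfl (sdiff_subset_sdiff hD.subset subset_rfl)), by omega⟩, ?_⟩
  rw [dartCount_comm]
  omega

lemma IsLeafBlock.isPartialDecomposition_sdiff_of_isEar (hD : G.IsLeafBlock X H D d)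
    (hs : G.IsPartialDecomposition X H) (hYd : Y ⊆ D.erase d) (hY : G.IsEar D Y) :
    G.IsPartialDecomposition (X ∪ Y) (H \ Y) := by
  obtain ⟨hYH, hXY⟩ := hD.isEar hs hYd hY
  refine hs.sdiff hYH.subset hYH.connected hYH.connected_sdiff (by omega) ?_
  have := dartCount_compl_union_eq (G := G) hD.subset hs.disjoint Y
  have := hD.dartCount_eq_zero hYd
  omega

lemma IsPartialDecomposition.exists_two_pow_le_of_isEar (hs : G.IsPartialDecomposition X H)
    (hG : G.CubicThreeEdgeConnected) (hM : G.EarsBoundedBy M) (hY : G.IsEar H Y)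
    (ih : G.HasManyRelFlowBases M (X ∪ Y) (H \ Y)) :
    ∃ q, 2 ^ q ≤ (G.relFlowBases (X ∪ Y) (H \ Y)).card ∧
      H.card + 2 ≤ 2 * M * (q + 1) + G.dartCount H Hᶜ := by
  obtain ⟨q, hq, hle⟩ := ih
  have hlong := hM H Y hY hs.connected_compl
  have hcard := card_sdiff_add_card_eq_card hY.subset
  have := dartCount_sdiff_compl (G := G) hY.subset
  have := hY.dartCount_sdiff_le_and_dartCount_compl_eq hG
  exact ⟨q, hq, by rw [mul_add]; omega⟩

lemma IsLeafBlock.hasManyRelFlowBases_of_three_lt (hD : G.IsLeafBlock X H D d)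
    (hs : G.IsPartialDecomposition X H) (hG : G.CubicThreeEdgeConnected) (hM : G.EarsBoundedBy M)
    (h3 : 3 < G.dartCount D Dᶜ)
    (ih : ∀ X' H', H'.card < H.card → G.IsPartialDecomposition X' H' →
      G.HasManyRelFlowBases M X' H') :
    G.HasManyRelFlowBases M X H := by
  obtain ⟨Y, hYd, Y', hYd', hY, hY', hne, z, hz, hz'⟩ :=
    exists_two_isEar hG hD.connected hD.mem hD.bridgeless h3
  have hbranch {Y} (hYd : Y ⊆ D.erase d) (hY : G.IsEar D Y) :=
    hs.exists_two_pow_le_of_isEar hG hM (hD.isEar hs hYd hY).1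
      (ih _ _ (card_lt_card (sdiff_ssubset (hY.subset.trans hD.subset) hY.connected.1))
        (hD.isPartialDecomposition_sdiff_of_isEar hs hYd hY))
  have hmaps {Y} (hYd : Y ⊆ D.erase d) (hY : G.IsEar D Y) :
      ∀ S ∈ G.relFlowBases (X ∪ Y) (H \ Y), G.edgesWithin Y ∪ S ∈ G.relFlowBases X H := by
    intro S hS
    obtain ⟨hYH, hXY⟩ := hD.isEar hs hYd hY
    exact mem_relFlowBases.2 ((mem_relFlowBases.1 hS).edgesWithin_union hs.disjoint hYH.subset
      hs.connected_left hY.connected hXY hYH.attached)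
  obtain ⟨q₁, hq₁, hle₁⟩ := hbranch hYd hY
  obtain ⟨q₂, hq₂, hle₂⟩ := hbranch hYd' hY'
  obtain ⟨q, hq, hq'⟩ := exists_two_pow_succ_le hq₁ hq₂
    (card_add_card_le hY.connected hY'.connected hz hz' hne
      (fun S hS => (mem_relFlowBases.1 hS).subset) (fun S hS => (mem_relFlowBases.1 hS).subset)
      (hmaps hYd hY) (hmaps hYd' hY'))
  exact ⟨q + 1, hq, by rcases hq' with rfl | rfl <;> assumption⟩

lemma IsPartialDecomposition.hasManyRelFlowBases (hG : G.CubicThreeEdgeConnected)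
    (hM : G.EarsBoundedBy M) {n : ℕ} (hs : G.IsPartialDecomposition X H) (hn : H.card = n) :
    G.HasManyRelFlowBases M X H := by
  induction n using Nat.strong_induction_on generalizing X H with
  | _ n ih =>
    have ih' : ∀ X' H', H'.card < H.card → G.IsPartialDecomposition X' H' →
        G.HasManyRelFlowBases M X' H' := fun _ _ hlt hs' => ih _ (hn ▸ hlt) hs' rfl
    obtain ⟨D, d, hD⟩ := exists_isLeafBlock hs.disjoint hs.connected_right.1 hs.dartCount_eq
    have hDu : D ≠ univ := by
      rintro rfl
      obtain ⟨x, hx⟩ := hs.connected_left.1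
      exact Finset.disjoint_left.1 hs.disjoint hx (hD.subset (mem_univ x))
    rcases (hG.three_le_cut D ⟨d, hD.mem⟩ hDu).eq_or_lt with h3 | h3
    · exact hD.hasManyRelFlowBases hs h3.symm ((hD.isThreeBond hs h3.symm).hasManyFlowBases hG hM
        fun X' H' hlt => ih' X' H' (hlt.trans_le (card_le_card hD.subset))) ih'
    · exact hD.hasManyRelFlowBases_of_three_lt hs hG hM h3 ih'

end PartialDecomposition

/-! ### Pairs of flows -/

section FlowPairs

variable {V E : Type} [Fintype E]

/-- The flows `ψ` for which the pair `(ψ, φ)` avoids the pair `(f₂, f₃)` on every edge. -/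
noncomputable def partnerFlows (G : Multigraph V E) (f₂ : E → ZMod 2) (f₃ φ : E → ZMod 3) :
    Finset (E → ZMod 2) :=
  univ.filter fun ψ => G.IsFlow ψ ∧ ∀ x, φ x = f₃ x → ψ x ≠ f₂ x

/-- The pairs of flows over `ZMod 3` and `ZMod 2` that avoid the pair `(f₃, f₂)` on every edge.
They correspond to the flows over `ZMod 2 × ZMod 3` that avoid the function with these residues. -/
noncomputable def avoidingFlowPairs (G : Multigraph V E) (f₂ : E → ZMod 2) (f₃ : E → ZMod 3) :
    Finset (Σ _ : E → ZMod 3, E → ZMod 2) :=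
  (univ.filter fun φ : E → ZMod 3 => G.IsFlow φ).sigma (G.partnerFlows f₂ f₃)

variable {G : Multigraph V E} {S : Finset E} {A : Finset V} {f₂ : E → ZMod 2} {f₃ φ : E → ZMod 3}

lemma sum_card_partnerFlows_le {Φ : Finset (E → ZMod 3)} (h : ∀ φ ∈ Φ, G.IsFlow φ) :
    ∑ φ ∈ Φ, (G.partnerFlows f₂ f₃ φ).card ≤ (G.avoidingFlowPairs f₂ f₃).card := by
  rw [avoidingFlowPairs, card_sigma]
  exact sum_le_sum_of_subset fun φ hφ => by simp [h φ hφ]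

lemma card_partnerFlows_le (h : G.IsFlow φ) :
    (G.partnerFlows f₂ f₃ φ).card ≤ (G.avoidingFlowPairs f₂ f₃).card := by
  simpa using sum_card_partnerFlows_le (G := G) (f₂ := f₂) (f₃ := f₃) (Φ := {φ}) (by simpa using h)

lemma IsFlow.map {Γ Δ : Type} [AddCommGroup Γ] [AddCommGroup Δ] {φ : E → Γ} (hφ : G.IsFlow φ)
    (g : Γ →+ Δ) : G.IsFlow fun x => g (φ x) := fun v => by
  simpa only [map_sum, apply_ite g, map_zero] using congrArg g (hφ v)

lemma card_avoidingFlowPairs_le {Γ : Type} [AddCommGroup Γ] (e : Γ ≃+ ZMod 2 × ZMod 3)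
    (f : E → Γ) :
    (G.avoidingFlowPairs (fun x => (e (f x)).1) (fun x => (e (f x)).2)).card ≤
      Nat.card {φ : E → Γ // G.IsFlow φ ∧ ∀ x : E, φ x ≠ f x} := by
  have := Fintype.ofEquiv _ e.symm.toEquiv
  rw [Nat.card_eq_fintype_card, Fintype.card_subtype]
  refine card_le_card_of_injOn (fun p x => e.symm (p.2 x, p.1 x)) ?_ ?_
  · rintro ⟨φ, ψ⟩ hp
    simp only [avoidingFlowPairs, partnerFlows, coe_sigma, Set.mem_sigma_iff, mem_coe,
      mem_filter, mem_univ, true_and] at hp ⊢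
    obtain ⟨hφ, hψ, hne⟩ := hp
    refine ⟨?_, fun x hx => ?_⟩
    · have hpair := (hψ.map (AddMonoidHom.inl (ZMod 2) (ZMod 3))).add
        (hφ.map (AddMonoidHom.inr (ZMod 2) (ZMod 3)))
      convert hpair.map e.symm.toAddMonoidHom using 2
      simp
    · have hfx : e (f x) = (ψ x, φ x) := by rw [← hx, e.apply_symm_apply]
      exact hne x (by rw [hfx]) (by rw [hfx])
  · rintro ⟨φ, ψ⟩ - ⟨φ', ψ'⟩ - h
    have heq x : (ψ x, φ x) = (ψ' x, φ' x) := e.symm.injective (congrFun h x)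
    obtain rfl : φ = φ' := funext fun x => (Prod.ext_iff.1 (heq x)).2
    obtain rfl : ψ = ψ' := funext fun x => (Prod.ext_iff.1 (heq x)).1
    rfl

/-- The values on the edges of `S` where `φ` already differs from `f₃` can be chosen freely. -/
lemma ConnectedAvoiding.two_pow_le_card_partnerFlows (hS : G.ConnectedAvoiding S A)
    (hSA : S ⊆ G.edgesWithin A) (hφ : ∀ x, φ x = f₃ x → x ∈ S) :
    2 ^ (S.filter fun x => φ x ≠ f₃ x).card ≤ (G.partnerFlows f₂ f₃ φ).card := by
  have hex (T : Finset E) : ∃ ψ : E → ZMod 2, G.IsFlow ψ ∧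
      ∀ x ∈ S, ψ x = if φ x = f₃ x then f₂ x + 1 else if x ∈ T then 1 else 0 := by
    obtain ⟨ψ, hψ, hval, -⟩ := hS.exists_flow_extend (Γ := ZMod 2) hSA subset_rfl
      (fun x => if φ x = f₃ x then f₂ x + 1 else if x ∈ T then 1 else 0)
    exact ⟨ψ, hψ, hval⟩
  choose ψ hψ hval using hex
  rw [← card_powerset]
  refine card_le_card_of_injOn ψ (fun T _ => ?_) fun T hT T' hT' h => ?_
  · simp only [partnerFlows, mem_coe, mem_filter, mem_univ, true_and]
    exact ⟨hψ T, fun x hx => by simp [hval T x (hφ x hx), hx]⟩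
  · have hmem {T x} (hx : x ∈ S.filter fun x => φ x ≠ f₃ x) : ψ T x = 1 ↔ x ∈ T := by
      rw [mem_filter] at hx
      simp [hval T x hx.1, hx.2]
    ext x
    constructor <;> intro hx
    · rwa [← hmem (mem_powerset.1 hT hx), ← h, hmem (mem_powerset.1 hT hx)]
    · rwa [← hmem (mem_powerset.1 hT' hx), h, hmem (mem_powerset.1 hT' hx)]

end FlowPairs

section SparseSets

variable {E : Type} [Fintype E]

lemma card_filter_card_le (k : ℕ) :
    (univ.filter fun T : Finset E => T.card ≤ k).card ≤ (Fintype.card E + 1) ^ k := by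
  induction k with
  | zero => simp [filter_eq']
  | succ k ih =>
    have hoption : (univ : Finset (Option E)).card ≤ Fintype.card E + 1 := by simp
    rw [pow_succ]
    refine (card_le_card fun T hT => ?_).trans
      ((card_image_le (f := fun p : Finset E × Option E => p.1 ∪ p.2.toFinset)).trans
        ((card_product _ _).trans_le (Nat.mul_le_mul ih hoption)))
    simp only [mem_filter, mem_univ, true_and, mem_image, mem_product, and_true] at hT ⊢
    rcases T.eq_empty_or_nonempty with rfl | ⟨x, hx⟩
    · exact ⟨(∅, none), by simp, by simp⟩
    · refine ⟨(T.erase x, some x), ?_, ?_⟩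
      · rw [card_erase_of_mem hx]
        omega
      · rw [Option.toFinset_some, union_comm, ← insert_eq, insert_erase hx]

lemma card_le_card_image_mul {α : Type*} {k : ℕ} {F : Finset (Finset E)} {φ : Finset E → α}
    {P : α → E → Prop} (hP : ∀ S ∈ F, ∀ x, P (φ S) x → x ∈ S)
    (hk : ∀ S ∈ F, (S.filter fun x => ¬P (φ S) x).card ≤ k) :
    F.card ≤ (F.image φ).card * (Fintype.card E + 1) ^ k := by
  refine le_trans ?_ (Nat.mul_le_mul_left _ (card_filter_card_le (E := E) k))
  rw [← card_product]
  refine card_le_card_of_injOn (fun S => (φ S, S.filter fun x => ¬P (φ S) x)) ?_ ?_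
  · exact fun S hS => mem_product.2 ⟨mem_image_of_mem _ hS, mem_filter.2 ⟨mem_univ _, hk S hS⟩⟩
  · intro S hS S' hS' h
    obtain ⟨hφ, hfilter⟩ := Prod.ext_iff.1 h
    dsimp only at hφ hfilter
    rw [hφ] at hfilter
    ext x
    have hx := Finset.ext_iff.1 hfilter x
    have := hφ ▸ hP S hS x
    have := hP S' hS' x
    simp only [mem_filter] at hx
    tauto

end SparseSets

section FlowPairsOfFlowBases

variable {V E : Type} [Fintype V] [Fintype E] {G : Multigraph V E} {S : Finset E}
  {f₂ : E → ZMod 2} {f₃ : E → ZMod 3} {r : V} {y : E}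

lemma CubicThreeEdgeConnected.dartCount_singleton_compl (hG : G.CubicThreeEdgeConnected) (r : V) :
    G.dartCount {r} {r}ᶜ = 3 := by
  have hsplit := dartCount_add_compl (G := G) {r} {r}
  have := hG.cubic r
  have := hG.dartCount_self r
  omega

lemma CubicThreeEdgeConnected.connectedSet_compl_singleton (hG : G.CubicThreeEdgeConnected)
    (r : V) : G.ConnectedSet {r}ᶜ := by
  have hne : (univ.erase r).Nonempty := by
    rw [← card_pos, card_erase_of_mem (mem_univ r), card_univ]
    have := hG.two_le_card
    omega
  have hdart := hG.dartCount_singleton_compl r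
  rw [compl_eq_univ_sdiff, sdiff_singleton_eq_erase] at hdart ⊢
  refine connectedSet_erase (k := 3) hne (fun s hs => ?_) (by omega)
  rw [← dartCount_component_erase (mem_univ r) hs, ← compl_eq_univ_sdiff]
  refine hG.three_le_cut _ ⟨s, mem_component_self hs⟩ fun h => ?_
  exact notMem_erase r univ (component_subset _ s (h ▸ mem_univ r))

lemma IsFlowBase.exists_flow (hS : G.IsFlowBase {r}ᶜ S) (hG : G.CubicThreeEdgeConnected)
    (f₃ : E → ZMod 3) : ∃ φ : E → ZMod 3, G.IsFlow φ ∧ ∀ x, φ x = f₃ x → x ∈ S := by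
  have hrel := hS.isRelFlowBase (X := {r}) disjoint_compl_right (ConnectedSet.singleton r)
    (by rw [hG.dartCount_singleton_compl]; norm_num)
  obtain ⟨φ, hφ, -, hne⟩ := hrel.flowAvoidable f₃
  refine ⟨φ, hφ, fun x hx => by_contra fun hxS => hne x ?_ ?_ hx⟩
  · simp
  · simpa [hG.edgesWithin_singleton] using hxS

lemma IsFlowBase.disjoint_edgesBetween (hS : G.IsFlowBase {r}ᶜ S) :
    Disjoint S (G.edgesBetween {r} {r}ᶜ) := by
  refine disjoint_left.2 fun x hx hxR => ?_
  exact (mem_edgesBetween.1 hxR).symm.notMem_edgesWithin disjoint_compl_left (hS.subset hx)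

lemma IsFlowBase.connectedAvoiding_union_erase (hS : G.IsFlowBase {r}ᶜ S)
    (hy : y ∈ G.edgesBetween {r} {r}ᶜ) :
    G.ConnectedAvoiding (S ∪ (G.edgesBetween {r} {r}ᶜ).erase y) univ := by
  rw [← union_compl {r}]
  refine (ConnectedAvoiding.singleton _ r).union_of_links (hS.connectedAvoiding.anti ?_) ?_
    (mem_edgesBetween.1 hy)
  · intro x hx hs ht
    refine (mem_union.1 hx).resolve_right fun hx => ?_
    exact (mem_edgesBetween.1 (mem_of_mem_erase hx)).symm.notMem_edgesWithin disjoint_compl_left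
      (mem_edgesWithin.2 ⟨hs, ht⟩)
  · simp [disjoint_right.1 hS.disjoint_edgesBetween hy]

/-- Two of the three edges at `r` provide the factor `4`. -/
lemma IsFlowBase.four_mul_two_pow_le (hS : G.IsFlowBase {r}ᶜ S) (hG : G.CubicThreeEdgeConnected)
    {φ : E → ZMod 3} (hφ : ∀ x, φ x = f₃ x → x ∈ S) :
    4 * 2 ^ (S.filter fun x => φ x ≠ f₃ x).card ≤ (G.partnerFlows f₂ f₃ φ).card := by
  have hcard : (G.edgesBetween {r} {r}ᶜ).card = 3 := by
    rw [← dartCount_eq_card_edgesBetween disjoint_compl_right, hG.dartCount_singleton_compl]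
  obtain ⟨y, hy⟩ : (G.edgesBetween {r} {r}ᶜ).Nonempty := by
    rw [← card_pos]
    omega
  have hdisj := hS.disjoint_edgesBetween.mono_right (erase_subset y _)
  refine le_trans (le_of_eq ?_)
    ((hS.connectedAvoiding_union_erase hy).two_pow_le_card_partnerFlows (f₂ := f₂) (f₃ := f₃)
      (fun x _ => by simp) fun x hx => mem_union_left _ (hφ x hx))
  have hfree : ((G.edgesBetween {r} {r}ᶜ).erase y).filter (fun x => φ x ≠ f₃ x) =
      (G.edgesBetween {r} {r}ᶜ).erase y :=
    filter_eq_self.2 fun x hx h => disjoint_right.1 hdisj hx (hφ x h)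
  rw [filter_union, card_union_of_disjoint (disjoint_filter_filter hdisj), hfree,
    card_erase_of_mem hy, hcard, pow_add]
  ring

lemma four_mul_two_pow_le_or_card_flowBases_le (hG : G.CubicThreeEdgeConnected) (r : V)
    (f₂ : E → ZMod 2) (f₃ : E → ZMod 3) (k : ℕ) :
    4 * 2 ^ (k + 1) ≤ (G.avoidingFlowPairs f₂ f₃).card ∨
      4 * (G.flowBases {r}ᶜ).card ≤
        (G.avoidingFlowPairs f₂ f₃).card * (Fintype.card E + 1) ^ k := by
  have hex : ∀ S ∈ G.flowBases {r}ᶜ, ∃ φ : E → ZMod 3, G.IsFlow φ ∧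
      ∀ x, φ x = f₃ x → x ∈ S := fun S hS => (mem_flowBases.1 hS).exists_flow hG f₃
  choose! φ hφ hφS using hex
  have hfour : ∀ S ∈ G.flowBases {r}ᶜ, 4 * 2 ^ (S.filter fun x => φ S x ≠ f₃ x).card ≤
      (G.partnerFlows f₂ f₃ (φ S)).card := fun S hS =>
    (mem_flowBases.1 hS).four_mul_two_pow_le hG (hφS S hS)
  by_cases hlarge : ∃ S ∈ G.flowBases {r}ᶜ, k + 1 ≤ (S.filter fun x => φ S x ≠ f₃ x).card
  · obtain ⟨S, hS, hk⟩ := hlarge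
    exact Or.inl ((Nat.mul_le_mul_left 4 (Nat.pow_le_pow_right two_pos hk)).trans
      ((hfour S hS).trans (card_partnerFlows_le (hφ S hS))))
  push Not at hlarge
  have hbases := card_le_card_image_mul (P := fun (φ : E → ZMod 3) x => φ x = f₃ x) hφS
    fun S hS => by convert Nat.lt_succ_iff.1 (hlarge S hS)
  set Φ := (G.flowBases {r}ᶜ).image φ
  have hΦ : 4 * Φ.card ≤ (G.avoidingFlowPairs f₂ f₃).card := by
    refine le_trans ?_ (sum_card_partnerFlows_le (Φ := Φ) (forall_mem_image.2 hφ))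
    rw [mul_comm, ← smul_eq_mul]
    refine card_nsmul_le_sum _ _ _ (forall_mem_image.2 fun S hS => ?_)
    exact (Nat.le_mul_of_pos_right 4 (Nat.two_pow_pos _)).trans (hfour S hS)
  right
  calc 4 * (G.flowBases {r}ᶜ).card
      ≤ 4 * (Φ.card * (Fintype.card E + 1) ^ k) := Nat.mul_le_mul_left 4 (by convert hbases)
    _ = 4 * Φ.card * (Fintype.card E + 1) ^ k := by ring
    _ ≤ (G.avoidingFlowPairs f₂ f₃).card * (Fintype.card E + 1) ^ k := by gcongr

end FlowPairsOfFlowBases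

/-! ### Long ears and induced cycles -/

section Averaging

variable {V E : Type} [Fintype E] {G : Multigraph V E} {A : Finset V} {x : E}

lemma exists_card_le_two_mul_card_filter {α β : Type*} {W : Finset α} {T : Finset β}
    {P : α → β → Prop} [DecidableRel P] (hW : W.Nonempty)
    (h : ∀ x ∈ T, W.card ≤ 2 * (W.filter fun χ => P χ x).card) :
    ∃ χ ∈ W, T.card ≤ 2 * (T.filter fun x => P χ x).card := by
  refine exists_le_of_sum_le hW ?_
  rw [sum_const, smul_eq_mul, ← mul_sum, mul_comm]
  calc T.card * W.card ≤ ∑ x ∈ T, 2 * (W.filter fun χ => P χ x).card := by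
        simpa using card_nsmul_le_sum T _ _ h
    _ = 2 * ∑ χ ∈ W, (T.filter fun x => P χ x).card := by
        rw [← mul_sum]
        exact congrArg _ (sum_card_bipartiteAbove_eq_sum_card_bipartiteBelow P).symm

/-- The flows over `ZMod 3` of the subgraph induced on `A`, extended by `0`. -/
noncomputable def flowsWithin (G : Multigraph V E) (A : Finset V) : Finset (E → ZMod 3) :=
  univ.filter fun χ => G.IsFlow χ ∧ ∀ x ∉ G.edgesWithin A, χ x = 0

@[simp] lemma mem_flowsWithin {χ : E → ZMod 3} :
    χ ∈ G.flowsWithin A ↔ G.IsFlow χ ∧ ∀ x ∉ G.edgesWithin A, χ x = 0 := by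
  simp [flowsWithin]

/-- Adding a flow with value `1` on `x` maps the flows with value `γ` on `x` to other flows. -/
lemma ConnectedAvoiding.card_flowsWithin_le (h : G.ConnectedAvoiding {x} A)
    (hx : x ∈ G.edgesWithin A) (γ : ZMod 3) :
    (G.flowsWithin A).card ≤ 2 * ((G.flowsWithin A).filter fun χ => χ x ≠ γ).card := by
  obtain ⟨χ₁, hχ₁, hval, hzero⟩ := h.exists_flow_single hx (mem_singleton_self x) (1 : ZMod 3)
  have hmem : χ₁ ∈ G.flowsWithin A := mem_flowsWithin.2 ⟨hχ₁, fun y hy => hzero y fun hy' =>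
    (mem_insert.1 hy').elim (fun hyx => hy (hyx ▸ hx)) fun hy' => hy (mem_sdiff.1 hy').1⟩
  have hle : ((G.flowsWithin A).filter fun χ => χ x = γ).card ≤
      ((G.flowsWithin A).filter fun χ => χ x ≠ γ).card := by
    refine card_le_card_of_injOn (· + χ₁) (fun χ hχ => ?_) fun _ _ _ _ => add_right_cancel
    simp only [mem_coe, mem_filter, mem_flowsWithin] at hχ hmem ⊢
    obtain ⟨⟨hflow, hsupp⟩, rfl⟩ := hχ
    exact ⟨⟨hflow.add hχ₁, fun y hy => by simp [hsupp y hy, hmem.2 y hy]⟩, by simp [hval]⟩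
  rw [← card_filter_add_card_filter_not (s := G.flowsWithin A) fun χ => χ x = γ]
  simp only [ne_eq] at hle ⊢
  omega

lemma exists_flowsWithin_card_le (h : ∀ x ∈ G.edgesWithin A, G.ConnectedAvoiding {x} A)
    (f : E → ZMod 3) : ∃ χ ∈ G.flowsWithin A,
      (G.edgesWithin A).card ≤ 2 * ((G.edgesWithin A).filter fun x => χ x ≠ f x).card :=
  exists_card_le_two_mul_card_filter ⟨0, mem_flowsWithin.2 ⟨isFlow_zero, fun _ _ => rfl⟩⟩
    fun x hx => (h x hx).card_flowsWithin_le hx (f x)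

end Averaging

section InducedCycle

variable {V E : Type} [Fintype V] [Fintype E]

/-- In a cubic graph: `C` is the vertex set of an induced cycle with connected complement. The
condition on the edges that leave `C` says that the subgraph induced on `C` is 2-regular. -/
structure IsInducedCycle (G : Multigraph V E) (C : Finset V) : Prop where
  connected : G.ConnectedSet C
  connected_compl : G.ConnectedSet Cᶜ
  dartCount_compl : ∀ v ∈ C, G.dartCount {v} Cᶜ = 1

variable {G : Multigraph V E} {A B C D Q X Y H : Finset V} {a r : V} {k : ℕ} {S : Finset E}
  {f₂ : E → ZMod 2} {f₃ : E → ZMod 3}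

lemma isEar_singleton (hG : G.CubicThreeEdgeConnected) (hD : G.ConnectedSet D) (ha : a ∈ D)
    (hne : (D.erase a).Nonempty) (h2 : 2 ≤ G.dartCount {a} Dᶜ) : G.IsEar D {a} := by
  have haD : {a} ⊆ D := singleton_subset_iff.2 ha
  have hpos := hD.dartCount_pos haD (singleton_nonempty a) (fun h => by simp [← h] at hne)
  have hout := dartCount_univ_eq (G := G) {a} haD
  rw [sdiff_singleton_eq_erase] at hpos
  rw [hG.cubic, hG.dartCount_self, sdiff_singleton_eq_erase] at hout
  refine ⟨⟨haD, ConnectedSet.singleton a, ?_⟩, ?_, h2⟩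
  · rw [sdiff_singleton_eq_erase]
    exact hD.erase_of_leaf ha (by omega) hne
  · simp only [mem_singleton, forall_eq, sdiff_singleton_eq_erase]
    omega

lemma IsEar.connectedSet_compl (hY : G.IsEar D Y) (hG : G.CubicThreeEdgeConnected)
    (hD : G.ConnectedSet Dᶜ) : G.ConnectedSet Yᶜ := by
  have hcompl : Yᶜ = (D \ Y) ∪ Dᶜ := by grind [hY.subset, Finset.mem_compl]
  have hcut := hG.three_le_cut D (hY.connected.1.mono hY.subset)
    fun h => hD.1.ne_empty (by simp [h])
  rw [← dartCount_add_sdiff hY.subset, (hY.dartCount_sdiff_le_and_dartCount_compl_eq hG).2] at hcut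
  rw [hcompl]
  exact hY.connected_sdiff.union_of_dartCount_pos hD (by omega)

lemma IsEar.exists_isEar_compl (hY : G.IsEar D Y) (hG : G.CubicThreeEdgeConnected)
    (hD : G.ConnectedSet Dᶜ) : ∃ Q ⊆ Dᶜ, G.IsEar Yᶜ Q := by
  have hYD := hY.subset
  have hsub : Dᶜ ⊆ Yᶜ := compl_subset_compl.2 hYD
  have hYc := hY.connectedSet_compl hG hD
  have hcount := (hY.dartCount_sdiff_le_and_dartCount_compl_eq hG).2
  rw [dartCount_comm] at hcount
  have hpart : G.IsPart Yᶜ Dᶜ :=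
    ⟨hsub, hD, by rw [show Yᶜ \ Dᶜ = D \ Y by grind [Finset.mem_compl]]; exact hY.connected_sdiff⟩
  obtain ⟨a, ha, haY⟩ := exists_dartCount_pos (A := Dᶜ) (B := Y) (G := G) (by omega)
  by_cases h2 : 2 ≤ G.dartCount {a} Y
  · obtain ⟨u, hu⟩ := hY.connected_sdiff.1
    refine ⟨{a}, singleton_subset_iff.2 ha,
      isEar_singleton hG hYc (hsub ha) ⟨u, ?_⟩ (by rwa [compl_compl])⟩
    grind [Finset.mem_compl]
  · have hsplit := dartCount_add_sdiff (G := G) (singleton_subset_iff.2 ha) Y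
    obtain ⟨b, hb, hbY⟩ := exists_dartCount_pos (A := Dᶜ \ {a}) (B := Y) (G := G) (by omega)
    rw [mem_sdiff, mem_singleton] at hb
    obtain ⟨Q, hQ, hear, -, -⟩ := exists_isEar_of_dartCount_le_two (a := a) (b := b) hG hYc hpart
      (by simp [haY, mem_compl.1 ha]) (by simp [hbY, mem_compl.1 hb.1]) (Ne.symm hb.2)
      (by rw [compl_compl]; exact hcount.le)
    exact ⟨Q, hQ, hear⟩

/-- Both ears are induced paths, and the two edges that leave `Y` outside of `D` end in `Q`. -/
lemma IsEar.isInducedCycle_union (hY : G.IsEar D Y) (hG : G.CubicThreeEdgeConnected)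
    (hQ : G.IsEar Yᶜ Q) (hQD : Q ⊆ Dᶜ) : G.IsInducedCycle (Y ∪ Q) := by
  have hYD := hY.subset
  have hdisj : Disjoint Y Q := disjoint_compl_right.mono_right hQ.subset
  have hcompl : (Y ∪ Q)ᶜ = Yᶜ \ Q := by rw [compl_union, sdiff_eq_inter_compl]
  have hsub : D \ Y ⊆ Yᶜ \ Q := by grind [Finset.mem_compl]
  obtain ⟨hYin, hYout⟩ := hY.dartCount_sdiff_le_and_dartCount_compl_eq hG
  obtain ⟨hQin, hQout⟩ := hQ.dartCount_sdiff_le_and_dartCount_compl_eq hG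
  rw [compl_compl, dartCount_comm] at hQout
  have hle : G.dartCount (Y ∪ Q) (Yᶜ \ Q) ≤ (Y ∪ Q).card := by
    have hD := dartCount_sdiff_add_compl (G := G) Y hYD
    have hsplit := dartCount_add_sdiff_right (G := G) hQ.subset Y
    rw [dartCount_union hdisj, card_union_of_disjoint hdisj]
    omega
  refine ⟨hY.connected.union_of_dartCount_pos hQ.connected (by omega),
    hcompl ▸ hQ.connected_sdiff, fun v hv => ?_⟩
  rw [hcompl]
  refine dartCount_singleton_eq_of_le (fun u hu => ?_) (by rwa [mul_one]) hv
  rcases mem_union.1 hu with hu | hu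
  · exact (hY.attached u hu).trans_le (dartCount_mono subset_rfl hsub)
  · exact hQ.attached u hu

lemma IsEar.exists_isInducedCycle (hY : G.IsEar D Y) (hG : G.CubicThreeEdgeConnected)
    (hD : G.ConnectedSet Dᶜ) : ∃ C, Y ⊆ C ∧ G.IsInducedCycle C := by
  obtain ⟨Q, hQD, hQ⟩ := hY.exists_isEar_compl hG hD
  exact ⟨Y ∪ Q, subset_union_left, hY.isInducedCycle_union hG hQ hQD⟩

lemma IsInducedCycle.dartCount_left (hC : G.IsInducedCycle C) (hG : G.CubicThreeEdgeConnected)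
    (hB : B ⊆ C) : G.dartCount B C = 2 * B.card := by
  have hv : ∀ v ∈ B, G.dartCount {v} C = 2 := fun v hv => by
    have hsplit := dartCount_add_compl (G := G) {v} C
    rw [hC.dartCount_compl v (hB hv), hG.cubic] at hsplit
    omega
  rw [dartCount_eq_sum, sum_congr rfl hv, sum_const, smul_eq_mul, mul_comm]

lemma IsInducedCycle.card_edgesWithin (hC : G.IsInducedCycle C)
    (hG : G.CubicThreeEdgeConnected) : (G.edgesWithin C).card = C.card := by
  have h := hC.dartCount_left hG subset_rfl
  rw [dartCount_self] at h
  omega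

lemma IsInducedCycle.two_le_dartCount (hC : G.IsInducedCycle C) (hG : G.CubicThreeEdgeConnected)
    (hB : B ⊆ C) (hne : B.Nonempty) (hBC : B ≠ C) : 2 ≤ G.dartCount B (C \ B) := by
  have hcount := hC.dartCount_left hG hB
  have hpos := hC.connected.dartCount_pos hB hne hBC
  rw [← dartCount_add_sdiff_right hB, dartCount_self] at hcount
  omega

lemma IsInducedCycle.connectedAvoiding_singleton (hC : G.IsInducedCycle C)
    (hG : G.CubicThreeEdgeConnected) (x : E) : G.ConnectedAvoiding {x} C := by
  refine ⟨hC.connected.1, fun B hB hne hBC => ?_⟩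
  have h2 := hC.two_le_dartCount hG hB hne hBC
  rw [dartCount_eq_card_edgesBetween disjoint_sdiff] at h2
  obtain ⟨y, hy, hyx⟩ := exists_mem_ne h2 x
  exact ⟨y, by simpa using hyx, mem_edgesBetween.1 hy⟩

lemma IsInducedCycle.connectedSet_erase (hC : G.IsInducedCycle C)
    (hG : G.CubicThreeEdgeConnected) (hr : r ∈ C) (hne : (C.erase r).Nonempty) :
    G.ConnectedSet (C.erase r) := by
  refine Multigraph.connectedSet_erase (k := 2) hne (fun s hs => ?_) ?_
  · rw [← dartCount_component_erase hr hs]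
    refine hC.two_le_dartCount hG ((component_subset _ s).trans (erase_subset r C))
      ⟨s, mem_component_self hs⟩ fun h => ?_
    exact notMem_erase r C (component_subset _ s (h.symm ▸ hr))
  · have hcount := hC.dartCount_left hG (singleton_subset_iff.2 hr)
    rw [card_singleton] at hcount
    have := dartCount_mono (G := G) (subset_refl {r}) (erase_subset r C)
    omega

lemma IsInducedCycle.isPartialDecomposition (hC : G.IsInducedCycle C)
    (hG : G.CubicThreeEdgeConnected) (hr : r ∈ C) (hne : (C.erase r).Nonempty) :
    G.IsPartialDecomposition (C.erase r) Cᶜ := by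
  refine ⟨disjoint_compl_right.mono_left (erase_subset r C), hC.connectedSet_erase hG hr hne,
    hC.connected_compl, by rw [compl_compl]; exact hC.connected, ?_⟩
  rw [show (Cᶜ ∪ C.erase r)ᶜ = {r} by grind [Finset.mem_compl], dartCount_comm]
  exact hC.dartCount_compl r hr

lemma earsBoundedBy_card (G : Multigraph V E) : G.EarsBoundedBy (Fintype.card V) :=
  fun _ Y _ _ => (card_le_univ Y).trans (Nat.le_succ _)

lemma IsPartialDecomposition.exists_isRelFlowBase (h : G.IsPartialDecomposition X H)
    (hG : G.CubicThreeEdgeConnected) : ∃ S, G.IsRelFlowBase X H S := by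
  obtain ⟨q, hq, -⟩ := h.hasManyRelFlowBases hG G.earsBoundedBy_card rfl
  obtain ⟨S, hS⟩ := card_pos.1 ((Nat.two_pow_pos q).trans_le hq)
  exact ⟨S, mem_relFlowBases.1 hS⟩

lemma IsRelFlowBase.exists_flow_of_isInducedCycle (hS : G.IsRelFlowBase (C.erase r) Cᶜ S)
    (hG : G.CubicThreeEdgeConnected) (hr : r ∈ C) (f₃ : E → ZMod 3) :
    ∃ φ : E → ZMod 3, G.IsFlow φ ∧ ∀ x, φ x = f₃ x → x ∈ G.edgesWithin C ∪ S := by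
  have havoid := hS.flowAvoidable
  rw [show C.erase r ∪ Cᶜ = {r}ᶜ by grind [Finset.mem_compl]] at havoid
  obtain ⟨φ, hφ, -, hne⟩ := havoid.union disjoint_compl_right (ConnectedSet.singleton r)
    (hG.connectedSet_compl_singleton r) (by rw [hG.dartCount_singleton_compl]; norm_num) f₃
  refine ⟨φ, hφ, fun x hx => by_contra fun hxS => hne x (by simp) (fun hmem => hxS ?_) hx⟩
  refine union_subset ?_ (union_subset_union_left (edgesWithin_mono (erase_subset r C))) hmem
  simp [hG.edgesWithin_singleton]

lemma IsInducedCycle.connectedAvoiding_edgesWithin_union (hC : G.IsInducedCycle C)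
    (hS : G.IsRelFlowBase X Cᶜ S) : G.ConnectedAvoiding (G.edgesWithin C ∪ S) univ := by
  refine ConnectedAvoiding.edgesWithin_union (subset_univ C) ?_ ?_ fun v hv => ?_ <;>
    rw [← compl_eq_univ_sdiff]
  · exact hS.subset
  · exact hS.connectedAvoiding
  · simp [hC.dartCount_compl v hv]

/-- Outside of the cycle the flow over `ZMod 3` comes from a relative flow base; inside, adding a
flow of the cycle makes half of the edges avoid `f₃`. -/
lemma IsInducedCycle.two_pow_le_card_avoidingFlowPairs (hC : G.IsInducedCycle C)
    (hG : G.CubicThreeEdgeConnected) (hcard : 2 ≤ C.card) (hk : 2 * k ≤ C.card)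
    (f₂ : E → ZMod 2) (f₃ : E → ZMod 3) : 2 ^ k ≤ (G.avoidingFlowPairs f₂ f₃).card := by
  obtain ⟨r, hr⟩ := hC.connected.1
  have hne : (C.erase r).Nonempty := by
    rw [← card_pos, card_erase_of_mem hr]
    omega
  obtain ⟨S, hS⟩ := (hC.isPartialDecomposition hG hr hne).exists_isRelFlowBase hG
  obtain ⟨φ, hφ, hφS⟩ := hS.exists_flow_of_isInducedCycle hG hr f₃
  obtain ⟨χ, hχ, hhalf⟩ := exists_flowsWithin_card_le
    (fun x _ => hC.connectedAvoiding_singleton hG x) fun x => f₃ x - φ x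
  rw [mem_flowsWithin] at hχ
  have hsum : ∀ x, (φ + χ) x = f₃ x → x ∈ G.edgesWithin C ∪ S := fun x hx => by
    by_contra hn
    rw [Pi.add_apply, hχ.2 x fun h => hn (mem_union_left _ h), add_zero] at hx
    exact hn (hφS x hx)
  have hfree : k ≤ ((G.edgesWithin C ∪ S).filter fun x => (φ + χ) x ≠ f₃ x).card := by
    have hsub : ((G.edgesWithin C).filter fun x => χ x ≠ f₃ x - φ x) ⊆
        (G.edgesWithin C ∪ S).filter fun x => (φ + χ) x ≠ f₃ x := fun x hx => by
      rw [mem_filter] at hx ⊢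
      exact ⟨mem_union_left _ hx.1, fun h => hx.2 (eq_sub_of_add_eq' h)⟩
    have := card_le_card hsub
    rw [hC.card_edgesWithin hG] at hhalf
    omega
  calc 2 ^ k ≤ _ := Nat.pow_le_pow_right two_pos hfree
    _ ≤ (G.partnerFlows f₂ f₃ (φ + χ)).card :=
      (hC.connectedAvoiding_edgesWithin_union hS).two_pow_le_card_partnerFlows (fun x _ => by simp)
        hsum
    _ ≤ _ := card_partnerFlows_le (hφ.add hχ.1)

lemma two_pow_le_card_avoidingFlowPairs_of_not_earsBoundedBy (hG : G.CubicThreeEdgeConnected)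
    (h : ¬G.EarsBoundedBy (2 * k)) (f₂ : E → ZMod 2) (f₃ : E → ZMod 3) :
    2 ^ k ≤ (G.avoidingFlowPairs f₂ f₃).card := by
  simp only [EarsBoundedBy, not_forall, not_le] at h
  obtain ⟨D, Y, hY, hD, hlong⟩ := h
  obtain ⟨C, hYC, hC⟩ := hY.exists_isInducedCycle hG hD
  have := card_le_card hYC
  exact hC.two_pow_le_card_avoidingFlowPairs hG (by omega) (by omega) f₂ f₃

end InducedCycle

/-! ### The bound for cubic graphs -/

section Exponent

lemma two_rpow_le_of_two_pow_le {k : ℝ} {K N : ℕ} (hk : k ≤ K) (h : 2 ^ K ≤ N) :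
    (2 : ℝ) ^ k ≤ N :=
  calc (2 : ℝ) ^ k ≤ (2 : ℝ) ^ (K : ℝ) := Real.rpow_le_rpow_of_exponent_le one_le_two hk
    _ = ((2 ^ K : ℕ) : ℝ) := by rw [Real.rpow_natCast, Nat.cast_pow, Nat.cast_ofNat]
    _ ≤ N := by exact_mod_cast h

lemma natCast_le_logb_two {n : ℕ} {x : ℝ} (h : 2 ^ n ≤ x) : (n : ℝ) ≤ Real.logb 2 x := by
  rwa [Real.le_logb_iff_rpow_le one_lt_two (lt_of_lt_of_le (by positivity) h), Real.rpow_natCast]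

lemma logb_three_mul_add_one_le {x : ℝ} (hx : 1 ≤ x) :
    Real.logb 2 (3 * x + 1) ≤ Real.logb 2 x + 2 := by
  have hlogb : Real.logb 2 (x * 2 ^ 2) = Real.logb 2 x + 2 := by
    rw [Real.logb_mul (by positivity) (by norm_num), Real.logb_pow,
      Real.logb_self_eq_one one_lt_two]
    norm_num
  rw [← hlogb]
  exact Real.logb_le_logb_of_le one_lt_two (by positivity) (by linarith)

lemma four_le_logb_two {x : ℝ} (hx : 2 ≤ x) (h : 2 < √x / Real.logb 2 x) :
    4 ≤ Real.logb 2 x := by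
  have h1 : 1 ≤ Real.logb 2 x := by exact_mod_cast natCast_le_logb_two (n := 1) (by linarith)
  rw [lt_div_iff₀ (by linarith), Real.lt_sqrt (by linarith)] at h
  have h2 : 2 ≤ Real.logb 2 x := by exact_mod_cast natCast_le_logb_two (n := 2) (by nlinarith)
  exact_mod_cast natCast_le_logb_two (n := 4) (by nlinarith)

lemma add_two_le_of_two_pow_le {q j N : ℕ} {x : ℝ} (hx : 1 ≤ x) (hN : 0 < N)
    (h : (2 : ℝ) ^ (q + 2) ≤ N * (3 * x + 1) ^ j) :
    (q : ℝ) + 2 ≤ Real.logb 2 N + j * (Real.logb 2 x + 2) := by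
  have hlogb := Real.logb_le_logb_of_le one_lt_two (by positivity) h
  rw [Real.logb_mul (by positivity) (by positivity), Real.logb_pow, Real.logb_pow,
    Real.logb_self_eq_one one_lt_two] at hlogb
  have := mul_le_mul_of_nonneg_left (logb_three_mul_add_one_le hx) (Nat.cast_nonneg (α := ℝ) j)
  push_cast at hlogb
  linarith

/-- The bound rests on `2 * (L + 3) ≤ L ^ 2`. -/
lemma two_mul_mul_add_one_lt_sq {k L j q : ℝ} (hL : 4 ≤ L) (hj : 0 ≤ j) (hjk : j ≤ k - 2)
    (hq : 0 ≤ q) (hqk : q ≤ k - 2 + j * (L + 2)) : 2 * (j + 3) * q + 1 < (k * L) ^ 2 := by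
  have hqL : q ≤ (k - 2) * (L + 3) := by
    have := mul_le_mul_of_nonneg_right hjk (show 0 ≤ L + 2 by linarith)
    linarith
  have : 1 < (2 * k + 4) * (L + 3) := by nlinarith
  have hjk' : j + 3 ≤ k + 1 := by linarith
  calc 2 * (j + 3) * q + 1
      ≤ 2 * (k + 1) * ((k - 2) * (L + 3)) + 1 := by gcongr; linarith
    _ = k ^ 2 * (2 * (L + 3)) + (1 - (2 * k + 4) * (L + 3)) := by ring
    _ < k ^ 2 * (2 * (L + 3)) := by linarith
    _ ≤ k ^ 2 * L ^ 2 := by gcongr; nlinarith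
    _ = (k * L) ^ 2 := by ring

lemma two_rpow_le_of_alternatives {ℓ N R : ℕ} (hℓ : 2 ≤ ℓ) (hN : 4 ≤ N)
    (hlong : ∀ K, 2 ^ K ≤ N ∨ ∃ q, 2 ^ q ≤ R ∧ ℓ ≤ 2 * K * q + 1)
    (hmany : ∀ j, 4 * 2 ^ (j + 1) ≤ N ∨ 4 * R ≤ N * (3 * ℓ + 1) ^ j) :
    (2 : ℝ) ^ (√ℓ / Real.logb 2 ℓ) ≤ N := by
  have hℓ' : (2 : ℝ) ≤ ℓ := by exact_mod_cast hℓ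
  have hkL : √ℓ / Real.logb 2 ℓ * Real.logb 2 ℓ = √ℓ :=
    div_mul_cancel₀ _ (Real.logb_pos one_lt_two (by linarith)).ne'
  have hL := four_le_logb_two hℓ'
  set k := √ℓ / Real.logb 2 ℓ
  rcases le_or_gt k 2 with hk | hk
  · exact two_rpow_le_of_two_pow_le (K := 2) (by exact_mod_cast hk) (by simpa using hN)
  obtain ⟨j, hj⟩ : ∃ j, ⌈k⌉₊ = j + 3 :=
    Nat.exists_eq_add_of_le' (Nat.lt_ceil.2 (by exact_mod_cast hk))
  have hkj : k ≤ (j + 3 : ℕ) := hj ▸ Nat.le_ceil k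
  have hjk : (j + 3 : ℕ) < k + 1 := hj ▸ Nat.ceil_lt_add_one (by linarith)
  push_cast at hjk
  rcases hlong (j + 3) with h | ⟨q, hqR, hq⟩
  · exact two_rpow_le_of_two_pow_le hkj h
  rcases hmany j with h | h
  · exact two_rpow_le_of_two_pow_le hkj ((pow_add 2 (j + 1) 2).trans_le (by rwa [mul_comm]))
  have hpow : 2 ^ (q + 2) ≤ N * (3 * ℓ + 1) ^ j := by
    rw [pow_add]
    omega
  have hlogN := add_two_le_of_two_pow_le (x := ℓ) (N := N) (by linarith) (by omega)
    (by exact_mod_cast hpow)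
  have hq' : (ℓ : ℝ) ≤ 2 * (j + 3) * q + 1 := by exact_mod_cast hq
  rw [← Real.le_logb_iff_rpow_le one_lt_two (by positivity)]
  by_contra! hlt
  have := two_mul_mul_add_one_lt_sq (k := k) (hL hk) (Nat.cast_nonneg j) (by linarith)
    (Nat.cast_nonneg q) (by linarith)
  rw [hkL, Real.sq_sqrt (by positivity)] at this
  linarith

end Exponent

section CubicBound

variable {V E : Type} [Fintype V] [Fintype E] {G : Multigraph V E}

lemma CubicThreeEdgeConnected.two_mul_card_edges (hG : G.CubicThreeEdgeConnected) :
    2 * Fintype.card E = 3 * Fintype.card V := by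
  rw [← dartCount_univ_univ G, hG.dartCount_univ, card_univ]

lemma CubicThreeEdgeConnected.hasManyFlowBases_compl_singleton {M : ℕ}
    (hG : G.CubicThreeEdgeConnected) (hM : G.EarsBoundedBy M) (r : V) :
    G.HasManyFlowBases M {r}ᶜ := by
  have hbond : G.IsThreeBond {r}ᶜ := ⟨
    by rw [compl_compl, dartCount_comm, hG.dartCount_singleton_compl],
    hG.connectedSet_compl_singleton r, by rw [compl_compl]; exact ConnectedSet.singleton r⟩
  exact hbond.hasManyFlowBases hG hM fun _ _ _ h => h.hasManyRelFlowBases hG hM rfl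

lemma CubicThreeEdgeConnected.le_card_avoidingFlowPairs (hG : G.CubicThreeEdgeConnected) {ℓ : ℕ}
    (hℓ : 2 ≤ ℓ) (hE : Fintype.card E = Fintype.card V + ℓ) (f₂ : E → ZMod 2)
    (f₃ : E → ZMod 3) :
    (2 : ℝ) ^ (√ℓ / Real.logb 2 ℓ) ≤ (G.avoidingFlowPairs f₂ f₃).card := by
  have hcard := hG.two_mul_card_edges
  have hE3 : Fintype.card E = 3 * ℓ := by omega
  obtain ⟨r⟩ : Nonempty V := Fintype.card_pos_iff.1 (by omega)
  have hr : ({r}ᶜ : Finset V).card + 1 = 2 * ℓ := by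
    rw [card_compl, card_singleton]
    omega
  have hpairs j := four_mul_two_pow_le_or_card_flowBases_le hG r f₂ f₃ j
  rw [hE3] at hpairs
  refine two_rpow_le_of_alternatives (R := (G.flowBases {r}ᶜ).card) hℓ ?_ (fun K => ?_) hpairs
  · obtain ⟨q, hq, -⟩ := hG.hasManyFlowBases_compl_singleton G.earsBoundedBy_card r
    have := Nat.one_le_two_pow (n := q)
    rcases hpairs 0 with h | h
    · omega
    · rw [pow_zero, mul_one] at h
      omega
  · by_cases hK : G.EarsBoundedBy (2 * K)
    · obtain ⟨q, hq, hq'⟩ := hG.hasManyFlowBases_compl_singleton hK r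
      refine Or.inr ⟨q, hq, ?_⟩
      nlinarith
    · exact Or.inl (two_pow_le_card_avoidingFlowPairs_of_not_earsBoundedBy hG hK f₂ f₃)

end CubicBound

/-! ### Splitting off pairs of edges -/

section Boundary

variable {V E : Type} [Fintype E]

/-- The edges with exactly one end in `A`. -/
noncomputable def boundary (G : Multigraph V E) (A : Finset V) : Finset E :=
  univ.filter fun x => ¬(G.src x ∈ A ↔ G.tgt x ∈ A)

/-- The edges with at least one end `v`. -/
noncomputable def incidentEdges (G : Multigraph V E) (v : V) : Finset E :=
  univ.filter fun x => G.src x = v ∨ G.tgt x = v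

variable {G : Multigraph V E} {A B : Finset V} {x : E} {u v w : V}

@[simp] lemma mem_boundary : x ∈ G.boundary A ↔ ¬(G.src x ∈ A ↔ G.tgt x ∈ A) := by
  simp [boundary]

@[simp] lemma mem_incidentEdges : x ∈ G.incidentEdges v ↔ G.src x = v ∨ G.tgt x = v := by
  simp [incidentEdges]

lemma Reaches.mem_of_mem (h : G.Reaches (· ∉ G.boundary A) u w) (hu : u ∈ A) : w ∈ A := by
  induction h with
  | refl => exact hu
  | tail _ hadj ih =>
    obtain ⟨x, hx, ⟨rfl, rfl⟩ | ⟨rfl, rfl⟩⟩ := hadj <;> simp_all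

variable [Fintype V]

lemma boundary_compl (G : Multigraph V E) (A : Finset V) : G.boundary Aᶜ = G.boundary A := by
  ext x
  simp only [mem_boundary, Finset.mem_compl]
  tauto

lemma card_boundary (G : Multigraph V E) (A : Finset V) :
    (G.boundary A).card = G.dartCount A Aᶜ := by
  rw [dartCount_eq_card_edgesBetween disjoint_compl_right]
  congr 1
  ext x
  simp only [mem_boundary, mem_edgesBetween, Links, Finset.mem_compl]
  tauto

lemma dartCount_submodular (A B : Finset V) :
    G.dartCount (A ∪ B) (A ∪ B)ᶜ + G.dartCount (A ∩ B) (A ∩ B)ᶜ ≤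
      G.dartCount A Aᶜ + G.dartCount B Bᶜ := by
  simp only [dartCount, ← sum_add_distrib]
  refine sum_le_sum fun x _ => ?_
  by_cases G.src x ∈ A <;> by_cases G.src x ∈ B <;> by_cases G.tgt x ∈ A <;>
    by_cases G.tgt x ∈ B <;> simp [*]

lemma EdgeConnected.le_dartCount_compl {k : ℕ} (hG : G.EdgeConnected k) (hne : A.Nonempty)
    (hA : A ≠ univ) : k ≤ G.dartCount A Aᶜ := by
  by_contra! hlt
  rw [← card_boundary, ← Set.ncard_coe_finset] at hlt
  obtain ⟨u, hu⟩ := hne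
  refine hA (eq_univ_of_forall fun w => ?_)
  exact Reaches.mem_of_mem (by simpa only [mem_coe] using (hG _ hlt).2 u w) hu

lemma card_incidentEdges (h : ∀ x, ¬(G.src x = v ∧ G.tgt x = v)) :
    (G.incidentEdges v).card = G.dartCount {v} univ := by
  have hloop : G.dartCount {v} {v} = 0 := by
    simp [dartCount_self, card_eq_zero, eq_empty_iff_forall_notMem, h]
  rw [← dartCount_add_compl {v} {v}, hloop, zero_add, ← card_boundary]
  congr 1
  ext x
  have := h x
  simp only [mem_incidentEdges, mem_boundary, mem_singleton]
  tauto

end Boundary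

section Degree

variable {V E : Type} [Fintype V] [Fintype E] {G : Multigraph V E} {A B : Finset V}

lemma ThreeLeCuts.three_le_dartCount (hG : G.ThreeLeCuts) (hV : 2 ≤ Fintype.card V) (v : V) :
    3 ≤ G.dartCount {v} univ := by
  refine (hG {v} (singleton_nonempty v) fun h => ?_).trans
    (dartCount_mono subset_rfl (subset_univ _))
  have := congrArg card h
  rw [card_singleton, card_univ] at this
  omega

lemma ThreeLeCuts.three_mul_card_le (hG : G.ThreeLeCuts)
    (h : Fintype.card V < Fintype.card E) : 3 * Fintype.card V ≤ 2 * Fintype.card E := by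
  by_cases hV : 2 ≤ Fintype.card V
  · have hsum := card_nsmul_le_sum univ _ 3 fun v _ => hG.three_le_dartCount hV v
    rwa [← dartCount_eq_sum, dartCount_univ_univ, card_univ, smul_eq_mul, mul_comm] at hsum
  · omega

lemma ThreeLeCuts.cubicThreeEdgeConnected (hG : G.ThreeLeCuts) (hV : 2 ≤ Fintype.card V)
    (h : 2 * Fintype.card E = 3 * Fintype.card V) : G.CubicThreeEdgeConnected where
  cubic v := dartCount_singleton_eq_of_le (fun u _ => hG.three_le_dartCount hV u)
    (by rw [dartCount_univ_univ, card_univ, h, mul_comm]) (mem_univ v)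
  three_le_cut := hG
  two_le_card := hV

lemma exists_four_le_dartCount (h : 3 * Fintype.card V < 2 * Fintype.card E) :
    ∃ v, 4 ≤ G.dartCount {v} univ := by
  by_contra! hlt
  have hsum := sum_le_card_nsmul univ _ 3 fun v _ => Nat.le_of_lt_succ (hlt v)
  rw [← dartCount_eq_sum, dartCount_univ_univ, card_univ, smul_eq_mul] at hsum
  omega

lemma ThreeLeCuts.dartCount_union_compl_eq (hG : G.ThreeLeCuts) (hA : G.dartCount A Aᶜ = 3)
    (hB : G.dartCount B Bᶜ = 3) (hne : (A ∩ B).Nonempty) (hAB : A ∪ B ≠ univ) :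
    G.dartCount (A ∪ B) (A ∪ B)ᶜ = 3 := by
  have hsub := dartCount_submodular (G := G) A B
  have hunion := hG (A ∪ B) (hne.mono (inter_subset_left.trans subset_union_left)) hAB
  have hinter := hG (A ∩ B) hne fun h => hAB
    (univ_subset_iff.1 (h ▸ inter_subset_left.trans subset_union_left))
  omega

end Degree

section SplitOff

variable {V E : Type}

/-- Splits the edges of `M` off the vertex `v`: the new vertex `none` takes the place of `v` as an
end of each edge of `M`, and the new edge `none` joins `v` to it. Only one end of a loop is
moved. -/
noncomputable def splitOff (G : Multigraph V E) (v : V) (M : Finset E) :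
    Multigraph (Option V) (Option E) where
  src e := e.elim (some v) fun x => if x ∈ M ∧ G.src x = v then none else some (G.src x)
  tgt e := e.elim none fun x => if x ∈ M ∧ G.src x ≠ v then none else some (G.tgt x)

/-- The end other than `v` of an edge `x` at `v`; it is `v` itself if `x` is a loop. -/
noncomputable def otherEnd (G : Multigraph V E) (v : V) (x : E) : V :=
  if G.src x = v then G.tgt x else G.src x

variable {G : Multigraph V E} {v : V} {M : Finset E} {x y : E} {A : Finset V}
  {A' : Finset (Option V)}

@[simp] lemma splitOff_src_none : (G.splitOff v M).src none = some v := rfl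

@[simp] lemma splitOff_tgt_none : (G.splitOff v M).tgt none = none := rfl

lemma splitOff_src_some (hx : x ∉ M) : (G.splitOff v M).src (some x) = some (G.src x) := by
  simp [splitOff, hx]

lemma splitOff_tgt_some (hx : x ∉ M) : (G.splitOff v M).tgt (some x) = some (G.tgt x) := by
  simp [splitOff, hx]

lemma splitOff_ends (hx : x ∈ M) :
    ((G.splitOff v M).src (some x) = none ∧
      (G.splitOff v M).tgt (some x) = some (G.otherEnd v x)) ∨
    ((G.splitOff v M).src (some x) = some (G.otherEnd v x) ∧
      (G.splitOff v M).tgt (some x) = none) := by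
  by_cases h : G.src x = v <;> simp [splitOff, otherEnd, hx, h]

@[simp] lemma getD_splitOff_src (x : E) : ((G.splitOff v M).src (some x)).getD v = G.src x := by
  by_cases h : x ∈ M ∧ G.src x = v <;> simp [splitOff, h]

variable [Fintype E]

lemma getD_splitOff_tgt (hM : M ⊆ G.incidentEdges v) (x : E) :
    ((G.splitOff v M).tgt (some x)).getD v = G.tgt x := by
  by_cases h : x ∈ M ∧ G.src x ≠ v
  · have := (mem_incidentEdges.1 (hM h.1)).resolve_left h.2
    simp [splitOff, h, this]
  · simp only [splitOff, Option.elim_some, if_neg h, Option.getD_some]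

lemma links_of_otherEnd_mem (hx : x ∈ G.incidentEdges v) (h : G.otherEnd v x ∈ A) :
    G.Links x {v} A := by
  rw [mem_incidentEdges] at hx
  unfold otherEnd at h
  split_ifs at h with hs
  · exact Or.inl ⟨mem_singleton.2 hs, h⟩
  · exact Or.inr ⟨h, mem_singleton.2 (hx.resolve_left hs)⟩

lemma otherEnd_mem_of_mem_boundary (hx : x ∈ G.incidentEdges v) (hv : v ∉ A)
    (h : x ∈ G.boundary A) : G.otherEnd v x ∈ A := by
  rw [mem_boundary] at h
  rw [mem_incidentEdges] at hx
  unfold otherEnd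
  split_ifs with hs <;> grind

section Flow

variable {Γ : Type} [AddCommGroup Γ] {φ ψ : Option E → Γ}

lemma IsFlow.mapVertices {W F : Type} [Finite W] [Fintype F] {H : Multigraph W F} {φ : F → Γ}
    (hφ : H.IsFlow φ) (p : W → V) : (mk (p ∘ H.src) (p ∘ H.tgt)).IsFlow φ := by
  cases nonempty_fintype W
  have hfiber (h : F → W) (u : V) :
      ∑ w with p w = u, (∑ x, if h x = w then φ x else 0) =
        ∑ x, if p (h x) = u then φ x else 0 := by
    rw [sum_comm]
    exact sum_congr rfl fun x _ => by rw [sum_ite_eq]; simp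
  intro u
  simp only [Function.comp_apply, ← hfiber]
  exact sum_congr rfl fun w _ => hφ w

lemma IsFlow.of_splitOff [Finite V] (hM : M ⊆ G.incidentEdges v)
    (hφ : (G.splitOff v M).IsFlow φ) : G.IsFlow fun x => φ (some x) := by
  intro u
  have hu := hφ.mapVertices (fun w => w.getD v) u
  simp only [Fintype.sum_option, Function.comp_apply, splitOff_src_none, splitOff_tgt_none,
    getD_splitOff_src, getD_splitOff_tgt hM, Option.getD_some, Option.getD_none] at hu
  exact add_left_cancel hu

lemma IsFlow.ext_splitOff (hφ : (G.splitOff v M).IsFlow φ) (hψ : (G.splitOff v M).IsFlow ψ)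
    (h : ∀ x : E, φ (some x) = ψ (some x)) : φ = ψ := by
  have hnone : (φ + -ψ) none = 0 := by
    refine (hφ.add hψ.neg).eq_zero_of_bridge (X := {none}) (by simp) ?_
    rintro (_ | y) hy hne
    · exact absurd rfl hy
    · exact absurd (by simp [h]) hne
  funext x
  cases x with
  | none => simpa [add_neg_eq_zero] using hnone
  | some x => exact h x

lemma card_flows_splitOff_le [Finite V] [Finite Γ] (hM : M ⊆ G.incidentEdges v) (f : E → Γ) :
    Nat.card {φ : Option E → Γ // (G.splitOff v M).IsFlow φ ∧ ∀ x, φ x ≠ x.elim 0 f} ≤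
      Nat.card {φ : E → Γ // G.IsFlow φ ∧ ∀ x, φ x ≠ f x} := by
  refine Nat.card_le_card_of_injective
    (fun φ => ⟨fun x => φ.1 (some x), φ.2.1.of_splitOff hM, fun x => φ.2.2 (some x)⟩) ?_
  intro φ ψ h
  exact Subtype.ext (φ.2.1.ext_splitOff ψ.2.1 (congrFun (Subtype.ext_iff.1 h)))

end Flow

lemma insertNone_subset_boundary_splitOff (hn : none ∈ A') (hv : some v ∉ A') :
    insertNone ((G.boundary A'.eraseNone \ M) ∪ {x ∈ M | G.otherEnd v x ∉ A'.eraseNone}) ⊆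
      (G.splitOff v M).boundary A' := by
  rintro (_ | x) hx
  · simp [hn, hv]
  · rcases mem_union.1 (some_mem_insertNone.1 hx) with hx | hx
    · obtain ⟨hx, hxM⟩ := mem_sdiff.1 hx
      simpa only [mem_boundary, splitOff_src_some hxM, splitOff_tgt_some hxM, mem_eraseNone]
        using hx
    · obtain ⟨hxM, hx⟩ := mem_filter.1 hx
      rw [mem_eraseNone] at hx
      rw [mem_boundary]
      obtain ⟨hs, ht⟩ | ⟨hs, ht⟩ := splitOff_ends (G := G) (v := v) hxM <;> simp [hs, ht, hn, hx]

lemma card_boundary_add_le_splitOff (hM : M ⊆ G.incidentEdges v) (hn : none ∈ A')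
    (hv : some v ∉ A') :
    (G.boundary A'.eraseNone).card + #{x ∈ M | G.otherEnd v x ∉ A'.eraseNone} + 1 ≤
      ((G.splitOff v M).boundary A').card + #{x ∈ M | G.otherEnd v x ∈ A'.eraseNone} := by
  have hsplit := card_le_card (insertNone_subset_boundary_splitOff (G := G) (M := M) hn hv)
  rw [card_insertNone, card_union_of_disjoint
    (disjoint_sdiff.symm.mono_right (filter_subset _ M))] at hsplit
  have hinter : G.boundary A'.eraseNone ∩ M ⊆ {x ∈ M | G.otherEnd v x ∈ A'.eraseNone} := by
    intro x hx
    obtain ⟨hx, hxM⟩ := mem_inter.1 hx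
    exact mem_filter.2
      ⟨hxM, otherEnd_mem_of_mem_boundary (hM hxM) (by rwa [mem_eraseNone]) hx⟩
  have := card_le_card hinter
  have := card_sdiff_add_card_inter (G.boundary A'.eraseNone) M
  omega

variable [Fintype V]

lemma ThreeLeCuts.three_le_card_boundary_splitOff (hG : G.ThreeLeCuts)
    (hM : M ⊆ G.incidentEdges v) (h : none ∈ A' ↔ some v ∈ A') (hne : A'.Nonempty)
    (hA : A' ≠ univ) : 3 ≤ ((G.splitOff v M).boundary A').card := by
  have hget (w : Option V) : w ∈ A' ↔ w.getD v ∈ A'.eraseNone := by cases w <;> simp [h]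
  have hcut := hG A'.eraseNone (hne.elim fun w hw => ⟨_, (hget w).1 hw⟩) fun huniv =>
    hA (eq_univ_of_forall fun w => (hget w).2 (huniv ▸ mem_univ _))
  rw [← card_boundary] at hcut
  refine hcut.trans (card_le_card_of_injOn some (fun x hx => ?_) (Option.some_injective E).injOn)
  rw [mem_coe, mem_boundary] at hx ⊢
  rwa [hget, hget, getD_splitOff_src, getD_splitOff_tgt hM]

/-- Two edges at `v` that can be split off without creating a cut of size less than three: no cut
of size three separates `v` from the other ends of both. -/
structure IsSplittablePair (G : Multigraph V E) (v : V) (x y : E) : Prop where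
  ne : x ≠ y
  left_mem : x ∈ G.incidentEdges v
  right_mem : y ∈ G.incidentEdges v
  dartCount_ne_three : ∀ A : Finset V, v ∉ A → G.otherEnd v x ∈ A → G.otherEnd v y ∈ A →
    G.dartCount A Aᶜ ≠ 3

lemma IsSplittablePair.subset_incidentEdges (h : G.IsSplittablePair v x y) :
    {x, y} ⊆ G.incidentEdges v :=
  insert_subset h.left_mem (singleton_subset_iff.2 h.right_mem)

lemma IsSplittablePair.three_le_card_boundary (h : G.IsSplittablePair v x y)
    (hG : G.ThreeLeCuts) (hn : none ∈ A') (hv : some v ∉ A') :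
    3 ≤ ((G.splitOff v {x, y}).boundary A').card := by
  set A := A'.eraseNone with hA
  have hvA : v ∉ A := by rwa [mem_eraseNone]
  have hle := card_boundary_add_le_splitOff h.subset_incidentEdges hn hv
  rw [← hA, card_boundary] at hle
  have hsum := card_filter_add_card_filter_not (s := {x, y}) fun z => G.otherEnd v z ∈ A
  rw [card_pair h.ne] at hsum
  rcases A.eq_empty_or_nonempty with hempty | hne
  · simp only [hempty, notMem_empty, filter_false, card_empty] at hsum hle
    omega
  have hcut := hG A hne fun huniv => hvA (huniv ▸ mem_univ v)
  rcases Nat.lt_or_ge #{z ∈ {x, y} | G.otherEnd v z ∈ A} 2 with hlt | hge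
  · omega
  · have hall := (card_filter_eq_iff (s := {x, y}) (p := fun z => G.otherEnd v z ∈ A)).1
      (by rw [card_pair h.ne]; omega)
    have := h.dartCount_ne_three A hvA (hall x (by simp)) (hall y (by simp))
    omega

lemma ThreeLeCuts.splitOff (hG : G.ThreeLeCuts) (h : G.IsSplittablePair v x y) :
    (G.splitOff v {x, y}).ThreeLeCuts := by
  intro A' hne hA
  rw [← card_boundary]
  by_cases hn : none ∈ A' <;> by_cases hv : some v ∈ A'
  · exact hG.three_le_card_boundary_splitOff h.subset_incidentEdges (by simp [hn, hv]) hne hA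
  · exact h.three_le_card_boundary hG hn hv
  · rw [← boundary_compl]
    exact h.three_le_card_boundary hG (by simpa using hn) (by simpa using hv)
  · exact hG.three_le_card_boundary_splitOff h.subset_incidentEdges (by simp [hn, hv]) hne hA

end SplitOff

section SplittablePair

variable {V E : Type} [Fintype V] [Fintype E] {G : Multigraph V E} {v : V} {x : E}
  {A : Finset V}

lemma exists_isSplittablePair_of_loop (h4 : 4 ≤ G.dartCount {v} univ)
    (hs : G.src x = v) (ht : G.tgt x = v) : ∃ y, G.IsSplittablePair v x y := by
  obtain ⟨y, hyx, hy⟩ : ∃ y, y ≠ x ∧ y ∈ G.incidentEdges v := by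
    by_contra! hn
    have : G.dartCount {v} univ = 2 := by
      rw [dartCount, sum_eq_single x _ (by simp)]
      · simp [hs, ht]
      · intro y _ hy
        have := hn y hy
        simp_all
    omega
  refine ⟨y, hyx.symm, mem_incidentEdges.2 (Or.inl hs), hy, fun A hv hx => absurd ?_ hv⟩
  rwa [otherEnd, if_pos hs, ht] at hx

lemma exists_otherEnd_notMem (h4 : 4 ≤ (G.incidentEdges v).card) (hv : v ∉ A)
    (h3 : G.dartCount A Aᶜ = 3) : ∃ y ∈ G.incidentEdges v, G.otherEnd v y ∉ A := by
  by_contra! hn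
  have hsub : G.incidentEdges v ⊆ G.edgesBetween {v} A := fun y hy =>
    mem_edgesBetween.2 (links_of_otherEnd_mem hy (hn y hy))
  have hle := card_le_card hsub
  rw [← dartCount_eq_card_edgesBetween (disjoint_singleton_left.2 hv), dartCount_comm] at hle
  have := dartCount_mono (G := G) (subset_refl A) (singleton_subset_iff.2 (mem_compl.2 hv))
  omega

/-- For a fixed `x` the union of two tight sets is tight. Hence a largest tight set contains all
others, and any `y` whose other end lies outside of it works. -/
lemma ThreeLeCuts.exists_isSplittablePair (hG : G.ThreeLeCuts)
    (h4 : 4 ≤ G.dartCount {v} univ) : ∃ x y, G.IsSplittablePair v x y := by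
  by_cases hloop : ∃ x, G.src x = v ∧ G.tgt x = v
  · obtain ⟨x, hs, ht⟩ := hloop
    exact ⟨x, exists_isSplittablePair_of_loop h4 hs ht⟩
  rw [← card_incidentEdges (not_exists.1 hloop)] at h4
  obtain ⟨x, hx⟩ : (G.incidentEdges v).Nonempty := card_pos.1 (by omega)
  let tight : Finset (Finset V) := {A | v ∉ A ∧ G.otherEnd v x ∈ A ∧ G.dartCount A Aᶜ = 3}
  have mem_tight {A} : A ∈ tight ↔ v ∉ A ∧ G.otherEnd v x ∈ A ∧ G.dartCount A Aᶜ = 3 := by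
    simp [tight]
  rcases tight.eq_empty_or_nonempty with hempty | hne
  · obtain ⟨y, hy, hyx⟩ := exists_mem_ne (show 1 < (G.incidentEdges v).card by omega) x
    refine ⟨x, y, hyx.symm, hx, hy, fun A hv hxA _ h3 => ?_⟩
    exact eq_empty_iff_forall_notMem.1 hempty A (mem_tight.2 ⟨hv, hxA, h3⟩)
  · obtain ⟨A, hA, hmax⟩ := exists_max_image tight card hne
    obtain ⟨hvA, hxA, hA3⟩ := mem_tight.1 hA
    obtain ⟨y, hy, hyA⟩ := exists_otherEnd_notMem h4 hvA hA3
    refine ⟨x, y, fun hxy => hyA (hxy ▸ hxA), hx, hy, fun B hvB hxB hyB hB3 => ?_⟩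
    have hvAB : v ∉ A ∪ B := by simp [hvA, hvB]
    have hunion := hG.dartCount_union_compl_eq hA3 hB3 ⟨_, mem_inter.2 ⟨hxA, hxB⟩⟩
      fun huniv => hvAB (huniv ▸ mem_univ v)
    have hle := hmax (A ∪ B) (mem_tight.2 ⟨hvAB, mem_union_left _ hxA, hunion⟩)
    have hBA := union_eq_left.1 (eq_of_subset_of_card_le subset_union_left hle).symm
    exact hyA (hBA hyB)

end SplittablePair

section Reduction

lemma ThreeLeCuts.le_card_flows {Γ : Type} [AddCommGroup Γ] (e : Γ ≃+ ZMod 2 × ZMod 3) {ℓ : ℕ}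
    (hℓ : 2 ≤ ℓ) (n : ℕ) : ∀ {V E : Type} [Fintype V] [Fintype E] {G : Multigraph V E},
    G.ThreeLeCuts → Fintype.card E = Fintype.card V + ℓ →
    2 * Fintype.card E = 3 * Fintype.card V + n → ∀ f : E → Γ,
    (2 : ℝ) ^ (√ℓ / Real.logb 2 ℓ) ≤
      Nat.card {φ : E → Γ // G.IsFlow φ ∧ ∀ x, φ x ≠ f x} := by
  have : Finite Γ := Finite.of_equiv _ e.symm.toEquiv
  induction n with
  | zero =>
    intro V E _ _ G hG hE hdeg f
    have hcubic := hG.cubicThreeEdgeConnected (by omega) hdeg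
    exact (hcubic.le_card_avoidingFlowPairs hℓ hE _ _).trans
      (Nat.cast_le.2 (card_avoidingFlowPairs_le e f))
  | succ n ih =>
    intro V E _ _ G hG hE hdeg f
    obtain ⟨v, hv⟩ := exists_four_le_dartCount (G := G) (by omega)
    obtain ⟨x, y, hxy⟩ := hG.exists_isSplittablePair hv
    have hsplit := ih (hG.splitOff hxy) (by simp only [Fintype.card_option]; omega)
      (by simp only [Fintype.card_option]; omega) fun x => x.elim 0 f
    exact hsplit.trans (Nat.cast_le.2 (card_flows_splitOff_le hxy.subset_incidentEdges f))

end Reduction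

end Multigraph

theorem many_Z6_group_connectivity_flows_general {V E : Type} [Fintype V] [Fintype E]
    (G : Multigraph V E) (hG : G.EdgeConnected 3)
    (ℓ : ℕ) (hℓ : (ℓ : ℤ) = (Fintype.card E : ℤ) - (Fintype.card V : ℤ)) (hℓ2 : 2 ≤ ℓ)
    (f : E → ZMod 6) :
    (2 : ℝ) ^ (Real.sqrt ℓ / Real.logb 2 ℓ) ≤
      Nat.card {φ : E → ZMod 6 // G.IsFlow φ ∧ ∀ e : E, φ e ≠ f e} := by
  have hE : Fintype.card E = Fintype.card V + ℓ := by omega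
  have hcuts : G.ThreeLeCuts := fun A hne hA => hG.le_dartCount_compl hne hA
  obtain ⟨n, hn⟩ := Nat.exists_eq_add_of_le (hcuts.three_mul_card_le (by omega))
  have e : ZMod 6 ≃+ ZMod 2 × ZMod 3 :=
    (ZMod.chineseRemainder (m := 2) (n := 3) (by norm_num)).toAddEquiv
  exact hcuts.le_card_flows e hℓ2 n hE hn f

/-- For an oriented 3-edge-connected graph with `ℓ = |E| - |V| ≥ 11` and any
`f : E → ℤ₆`, there are at least `2^(√ℓ / log₂ ℓ)` flows `φ` with `φ(e) ≠ f(e)`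
for every edge `e`. -/
theorem many_Z6_group_connectivity_flows {V E : Type} [Fintype V] [Fintype E]
    (G : Multigraph V E) (hG : G.EdgeConnected 3)
    (ℓ : ℕ) (hℓ : (ℓ : ℤ) = (Fintype.card E : ℤ) - (Fintype.card V : ℤ)) (hℓ11 : 11 ≤ ℓ)
    (f : E → ZMod 6) :
    (2 : ℝ) ^ (Real.sqrt ℓ / Real.logb 2 ℓ) ≤
      Nat.card {φ : E → ZMod 6 // G.IsFlow φ ∧ ∀ e : E, φ e ≠ f e} := by
  exact many_Z6_group_connectivity_flows_general G hG ℓ hℓ (by omega) f
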